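/- Let X ⊂ ℂⁿ and Y ⊂ ℂᵐ be algebraic curves, let p ∈ X and let q ∈ Y be a regular point of Y. If the germs (X, p) and (Y, q) are bi-Lipschitz equivalent, then p is a regular point of X. -/

import Mathlib

open Set Metric

noncomputable section

/-- An algebraic set in ℂᵏ: the common zero set of a finite family of polynomials. -/
def IsAlgebraicSet {k : ℕ} (X : Set (EuclideanSpace ℂ (Fin k))) : Prop :=
  ∃ S : Finset (MvPolynomial (Fin k) ℂ),
    X = {x | ∀ p ∈ S, MvPolynomial.eval (fun i => x i) p = 0}

/-- An irreducible algebraic curve: an infinite algebraic set all of whose proper algebraic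
subsets are finite. -/
def IsIrreducibleAlgebraicCurve {k : ℕ} (X : Set (EuclideanSpace ℂ (Fin k))) : Prop :=
  IsAlgebraicSet X ∧ X.Infinite ∧ ∀ Y, IsAlgebraicSet Y → Y ⊂ X → Y.Finite

/-- An algebraic curve: a finite union of irreducible algebraic curves. -/
def IsAlgebraicCurve {k : ℕ} (X : Set (EuclideanSpace ℂ (Fin k))) : Prop :=
  ∃ F : Finset (Set (EuclideanSpace ℂ (Fin k))),
    (∀ C ∈ F, IsIrreducibleAlgebraicCurve C) ∧ X = ⋃ C ∈ F, C

/-- `f` maps `X` bijectively onto `Y` and is bi-Lipschitz (outer metric). -/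
def IsBiLipschitzOn {E F : Type*} [NormedAddCommGroup E] [NormedAddCommGroup F]
    (f : E → F) (X : Set E) (Y : Set F) : Prop :=
  Set.BijOn f X Y ∧ ∃ C : ℝ, 1 ≤ C ∧ ∀ x ∈ X, ∀ x' ∈ X,
    C⁻¹ * ‖x - x'‖ ≤ ‖f x - f x'‖ ∧ ‖f x - f x'‖ ≤ C * ‖x - x'‖

/-- `X` and `Y` are bi-Lipschitz equivalent (with respect to the outer Euclidean metric). -/
def BiLipschitzEquiv {E F : Type*} [NormedAddCommGroup E] [NormedAddCommGroup F]
    (X : Set E) (Y : Set F) : Prop :=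
  ∃ f : E → F, IsBiLipschitzOn f X Y

/-- `X` and `Y` are bi-Lipschitz equivalent at infinity. -/
def BiLipschitzEquivAtInfinity {E F : Type*} [NormedAddCommGroup E] [NormedAddCommGroup F]
    (X : Set E) (Y : Set F) : Prop :=
  ∃ (K₁ : Set E) (K₂ : Set F), IsCompact K₁ ∧ IsCompact K₂ ∧
    BiLipschitzEquiv (X \ K₁) (Y \ K₂)

/-- The germs `(X, p)` and `(Y, q)` are bi-Lipschitz equivalent. -/
def GermBiLipschitzEquiv {E F : Type*} [NormedAddCommGroup E] [NormedAddCommGroup F]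
    (X : Set E) (p : E) (Y : Set F) (q : F) : Prop :=
  ∃ (U : Set E) (V : Set F), IsOpen U ∧ IsOpen V ∧ p ∈ U ∧ q ∈ V ∧
    ∃ f : E → F, IsBiLipschitzOn f (X ∩ U) (Y ∩ V) ∧ f p = q

/-- `γ` maps `D` homeomorphically onto `S`. -/
def MapsHomeomorphicallyOnto {E : Type*} [TopologicalSpace E]
    (γ : ℂ → E) (D : Set ℂ) (S : Set E) : Prop :=
  Set.InjOn γ D ∧ γ '' D = S ∧ ContinuousOn γ D ∧
    ∃ σ : E → ℂ, ContinuousOn σ S ∧ ∀ z ∈ D, σ (γ z) = z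

/-- A regular point of a curve `X ⊂ ℂᵏ`: some neighborhood of `p` in `X` is the
homeomorphic image of an injective holomorphic map with nowhere-vanishing derivative. -/
def IsRegularPoint {k : ℕ} (X : Set (EuclideanSpace ℂ (Fin k)))
    (p : EuclideanSpace ℂ (Fin k)) : Prop :=
  ∃ (U : Set (EuclideanSpace ℂ (Fin k))) (D : Set ℂ) (γ : ℂ → EuclideanSpace ℂ (Fin k)),
    IsOpen U ∧ p ∈ U ∧ IsOpen D ∧ DifferentiableOn ℂ γ D ∧ Set.InjOn γ D ∧
    (∀ z ∈ D, deriv γ z ≠ 0) ∧ MapsHomeomorphicallyOnto γ D (X ∩ U)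

/-- The set of singular points of `X`. -/
def SingularSet {k : ℕ} (X : Set (EuclideanSpace ℂ (Fin k))) :
    Set (EuclideanSpace ℂ (Fin k)) :=
  {p ∈ X | ¬ IsRegularPoint X p}

/-- `B` is a (smooth) branch through `q` with tangent vector `v`. -/
def IsBranchAt (B : Set (EuclideanSpace ℂ (Fin 2))) (q v : EuclideanSpace ℂ (Fin 2)) : Prop :=
  ∃ (D : Set ℂ) (γ : ℂ → EuclideanSpace ℂ (Fin 2)) (z₀ : ℂ),
    IsOpen D ∧ z₀ ∈ D ∧ DifferentiableOn ℂ γ D ∧ Set.InjOn γ D ∧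
    (∀ z ∈ D, deriv γ z ≠ 0) ∧ MapsHomeomorphicallyOnto γ D B ∧
    γ z₀ = q ∧ deriv γ z₀ = v

/-- `q` is a node of the plane curve `Y`: near `q`, `Y` is the union of two smooth branches
meeting only at `q` with distinct tangent lines. -/
def IsNode (Y : Set (EuclideanSpace ℂ (Fin 2))) (q : EuclideanSpace ℂ (Fin 2)) : Prop :=
  q ∈ Y ∧ ∃ (U B₁ B₂ : Set (EuclideanSpace ℂ (Fin 2))) (v₁ v₂ : EuclideanSpace ℂ (Fin 2)),
    IsOpen U ∧ q ∈ U ∧ Y ∩ U = B₁ ∪ B₂ ∧ B₁ ∩ B₂ = {q} ∧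
    IsBranchAt B₁ q v₁ ∧ IsBranchAt B₂ q v₂ ∧ ∀ c : ℂ, v₂ ≠ c • v₁

/-- The set of points of `ℂ²` having more than one `π`-preimage in `X`. -/
def MultipleSet {n : ℕ} (π : EuclideanSpace ℂ (Fin n) →ₗ[ℂ] EuclideanSpace ℂ (Fin 2))
    (X : Set (EuclideanSpace ℂ (Fin n))) : Set (EuclideanSpace ℂ (Fin 2)) :=
  {q | ∃ x ∈ X, ∃ y ∈ X, x ≠ y ∧ π x = q ∧ π y = q}

/-- `π` is a generic plane projection for the algebraic curve `X ⊂ ℂⁿ`. -/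
def IsGenericPlaneProjection {n : ℕ}
    (π : EuclideanSpace ℂ (Fin n) →ₗ[ℂ] EuclideanSpace ℂ (Fin 2))
    (X : Set (EuclideanSpace ℂ (Fin n))) : Prop :=
  Function.Surjective π ∧
  (∀ K : Set (EuclideanSpace ℂ (Fin 2)), IsCompact K → IsCompact (X ∩ ⇑π ⁻¹' K)) ∧
  (MultipleSet π X).Finite ∧
  (∀ q ∈ MultipleSet π X, ∃ x y, x ≠ y ∧ {z ∈ X | π z = q} = {x, y} ∧
    IsRegularPoint X x ∧ IsRegularPoint X y) ∧
  (∀ q ∈ MultipleSet π X, IsNode (⇑π '' X) q) ∧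
  (∀ p ∈ X, π p ∉ MultipleSet π X →
    ∃ (U : Set (EuclideanSpace ℂ (Fin n))) (V : Set (EuclideanSpace ℂ (Fin 2))),
      IsOpen U ∧ IsOpen V ∧ p ∈ U ∧ π p ∈ V ∧
      IsBiLipschitzOn (⇑π) (X ∩ U) ((⇑π '' X) ∩ V))

/-- The complex projective plane `ℂP²`. -/
abbrev ProjPlane : Type := Projectivization ℂ (Fin 3 → ℂ)

instance : TopologicalSpace ProjPlane :=
  inferInstanceAs (TopologicalSpace (Quotient (projectivizationSetoid ℂ (Fin 3 → ℂ))))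

/-- The embedding `ℂ² → ℂP²`, `(x, y) ↦ (x : y : 1)`. -/
def toProj (p : EuclideanSpace ℂ (Fin 2)) : ProjPlane :=
  Projectivization.mk ℂ ![p 0, p 1, 1] (fun h => by simpa using congrFun h 2)

/-- The line at infinity in `ℂP²`. -/
def lineAtInfinity : Set ProjPlane := {P | P.rep 2 = 0}

/-- The projective closure of a plane curve `X ⊂ ℂ²`: the topological closure in `ℂP²`. -/
def projClosure (X : Set (EuclideanSpace ℂ (Fin 2))) : Set ProjPlane :=
  closure (toProj '' X)

/-- The germs `(A, p)` and `(B, q)` are (ambient) topologically equivalent. -/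
def GermTopEquiv {T : Type*} [TopologicalSpace T] (A : Set T) (p : T) (B : Set T) (q : T) :
    Prop :=
  ∃ (U V : Set T) (φ ψ : T → T),
    IsOpen U ∧ IsOpen V ∧ p ∈ U ∧ q ∈ V ∧
    ContinuousOn φ U ∧ ContinuousOn ψ V ∧ Set.MapsTo φ U V ∧ Set.MapsTo ψ V U ∧
    (∀ x ∈ U, ψ (φ x) = x) ∧ (∀ y ∈ V, φ (ψ y) = y) ∧
    φ p = q ∧ φ '' (A ∩ U) = B ∩ V

/-- The `i`-th standard affine chart of `ℂP²`. -/
def chart (i : Fin 3) (P : ProjPlane) : EuclideanSpace ℂ (Fin 2) :=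
  (EuclideanSpace.equiv (Fin 2) ℂ).symm fun j => P.rep (i.succAbove j) / P.rep i

/-- A regular point of a curve `C ⊂ ℂP²`: read in a standard affine chart, some neighborhood
of `p` in `C` is the homeomorphic image of an injective holomorphic map with
nowhere-vanishing derivative. -/
def IsRegularPointProj (C : Set ProjPlane) (p : ProjPlane) : Prop :=
  ∃ i : Fin 3, p.rep i ≠ 0 ∧
    ∃ W : Set ProjPlane, IsOpen W ∧ p ∈ W ∧ W ⊆ {P : ProjPlane | P.rep i ≠ 0} ∧
      ∃ (D : Set ℂ) (γ : ℂ → EuclideanSpace ℂ (Fin 2)),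
        IsOpen D ∧ DifferentiableOn ℂ γ D ∧ Set.InjOn γ D ∧ (∀ z ∈ D, deriv γ z ≠ 0) ∧
        MapsHomeomorphicallyOnto γ D (chart i '' (C ∩ W))

/-- The set of singular points of a curve `C ⊂ ℂP²`. -/
def SingularSetProj (C : Set ProjPlane) : Set ProjPlane :=
  {p ∈ C | ¬ IsRegularPointProj C p}

/-- `C` is an irreducible component of the algebraic curve `X`. -/
def IsIrreducibleComponent {k : ℕ} (C X : Set (EuclideanSpace ℂ (Fin k))) : Prop :=
  IsIrreducibleAlgebraicCurve C ∧ C ⊆ X ∧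
    ∀ C', IsIrreducibleAlgebraicCurve C' → C' ⊆ X → C ⊆ C' → C' = C

/-- The degree of an algebraic plane curve: the minimal degree of a nonzero polynomial
vanishing identically on it. -/
def curveDegree (X : Set (EuclideanSpace ℂ (Fin 2))) : ℕ :=
  sInf {d | ∃ P : MvPolynomial (Fin 2) ℂ, P ≠ 0 ∧ P.totalDegree = d ∧
    ∀ x ∈ X, MvPolynomial.eval (fun i => x i) P = 0}

/-!
A regular point has a neighbourhood bi-Lipschitz to a plane disc, so near `p` the curve `X` is
bi-Lipschitz to a disc. Hence arbitrarily small punctured neighbourhoods of `p` in `X` are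
connected. On the other hand only finitely many complex lines are limits of secants through `p`:
the coordinates of `X` satisfy pairwise polynomial relations, and a limiting ratio of coordinates is
a root of the strict transform of such a relation on the exceptional line of the blow-up. A
connectedness argument therefore leaves a single tangent line at `p`.

Let `ℓ` be the orthogonal projection onto this line. Near `p` it is a branched cover of a disc,
unbranched away from `p`. Two points of `X` in the same fibre of `ℓ`, at distance `ρ` from `ℓ p`
after projection, are `o(ρ)` apart by tangency; by the Lipschitz bounds they are joined by a path
in `X` of diameter `o(ρ)`, whose projection stays in a disc avoiding `ℓ p`. A covering is trivial
over such a disc, so the two points coincide. Thus `ℓ` is injective near `p`, and its inverse is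
continuous, holomorphic away from `ℓ p`, hence holomorphic.
-/

open Filter Topology Asymptotics

section Germs

variable {E F G : Type*} [NormedAddCommGroup E] [NormedAddCommGroup F] [NormedAddCommGroup G]
  {f : E → F} {g : F → G} {X : Set E} {Y : Set F} {Z : Set G} {p : E} {q : F} {s : G}

namespace IsBiLipschitzOn

lemma continuousOn (h : IsBiLipschitzOn f X Y) : ContinuousOn f X := by
  obtain ⟨-, C, -, hC⟩ := h
  exact (LipschitzOnWith.of_dist_le_mul (K := C.toNNReal) fun x hx y hy ↦ by
    simpa only [dist_eq_norm] using (hC x hx y hy).2.trans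
      (mul_le_mul_of_nonneg_right (Real.le_coe_toNNReal C) (norm_nonneg _))).continuousOn

lemma symm (h : IsBiLipschitzOn f X Y) : IsBiLipschitzOn (Function.invFunOn f X) Y X := by
  obtain ⟨hbij, C, hC1, hC⟩ := h
  have hC0 : 0 < C := one_pos.trans_le hC1
  have hinv := hbij.invOn_invFunOn
  have hmaps := hbij.surjOn.mapsTo_invFunOn
  refine ⟨hbij.symm hinv.symm, C, hC1, fun y hy y' hy' ↦ ?_⟩
  have hfy := hC _ (hmaps hy) _ (hmaps hy')
  rw [hinv.2 hy, hinv.2 hy', inv_mul_le_iff₀ hC0] at hfy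
  exact ⟨(inv_mul_le_iff₀ hC0).2 hfy.2, hfy.1⟩

lemma comp (hg : IsBiLipschitzOn g Y Z) (hf : IsBiLipschitzOn f X Y) :
    IsBiLipschitzOn (g ∘ f) X Z := by
  obtain ⟨hfbij, C, hC1, hC⟩ := hf
  obtain ⟨hgbij, D, hD1, hD⟩ := hg
  have hD0 : 0 < D := one_pos.trans_le hD1
  refine ⟨hgbij.comp hfbij, D * C, one_le_mul_of_one_le_of_one_le hD1 hC1, fun x hx x' hx' ↦ ?_⟩
  obtain ⟨hf_low, hf_up⟩ := hC x hx x' hx'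
  obtain ⟨hg_low, hg_up⟩ := hD _ (hfbij.mapsTo hx) _ (hfbij.mapsTo hx')
  rw [mul_inv, mul_assoc, mul_assoc]
  exact ⟨(mul_le_mul_of_nonneg_left hf_low (inv_pos.2 hD0).le).trans hg_low,
    hg_up.trans (mul_le_mul_of_nonneg_left hf_up hD0.le)⟩

lemma mono {X' : Set E} (h : IsBiLipschitzOn f X Y) (hX' : X' ⊆ X) :
    IsBiLipschitzOn f X' (f '' X') := by
  obtain ⟨hbij, C, hC1, hC⟩ := h
  exact ⟨(hbij.injOn.mono hX').bijOn_image, C, hC1,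
    fun x hx x' hx' ↦ hC x (hX' hx) x' (hX' hx')⟩

lemma exists_isOpen_inter {U T : Set E} {V : Set F} (h : IsBiLipschitzOn f (X ∩ U) (Y ∩ V))
    (hV : IsOpen V) (hT : IsOpen T) (hp : p ∈ X ∩ U) (hpT : p ∈ T) :
    ∃ W, IsOpen W ∧ f p ∈ W ∧ IsBiLipschitzOn f (X ∩ (U ∩ T)) (Y ∩ W) := by
  obtain ⟨W, hW, hpre⟩ := continuousOn_iff'.1 h.symm.continuousOn T hT
  have himage : f '' (X ∩ (U ∩ T)) = Y ∩ (V ∩ W) := by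
    rw [← inter_assoc, inter_comm, h.1.invOn_invFunOn.1.image_inter', h.1.image_eq, hpre,
      inter_comm, inter_assoc]
  refine ⟨V ∩ W, hV.inter hW, (himage.le ⟨p, ⟨hp.1, hp.2, hpT⟩, rfl⟩).2, ?_⟩
  exact himage ▸ h.mono (inter_subset_inter_right X inter_subset_left)

end IsBiLipschitzOn

namespace GermBiLipschitzEquiv

lemma mem_right (h : GermBiLipschitzEquiv X p Y q) (hp : p ∈ X) : q ∈ Y := by
  obtain ⟨U, V, -, -, hpU, -, f, hf, rfl⟩ := h
  exact (hf.1.mapsTo ⟨hp, hpU⟩).1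

lemma symm (h : GermBiLipschitzEquiv X p Y q) (hp : p ∈ X) : GermBiLipschitzEquiv Y q X p := by
  obtain ⟨U, V, hU, hV, hpU, hqV, f, hf, rfl⟩ := h
  exact ⟨V, U, hV, hU, hqV, hpU, _, hf.symm, hf.1.invOn_invFunOn.1 ⟨hp, hpU⟩⟩

lemma trans (h : GermBiLipschitzEquiv X p Y q) (h' : GermBiLipschitzEquiv Y q Z s)
    (hp : p ∈ X) : GermBiLipschitzEquiv X p Z s := by
  have hq : q ∈ Y := h.mem_right hp
  obtain ⟨V, U, hV, hU, hqV, -, f, hf, rfl⟩ := h.symm hp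
  obtain ⟨V', W, hV', hW, hqV', -, g, hg, rfl⟩ := h'
  obtain ⟨U₁, hU₁, hpU₁, hf₁⟩ := hf.exists_isOpen_inter hU hV' ⟨hq, hqV⟩ hqV'
  obtain ⟨W₁, hW₁, hsW₁, hg₁⟩ := hg.exists_isOpen_inter hW hV ⟨hq, hqV'⟩ hqV
  rw [inter_comm V' V] at hg₁
  exact ⟨U₁, W₁, hU₁, hW₁, hpU₁, hsW₁, _, hg₁.comp hf₁.symm,
    congrArg g (hf₁.1.invOn_invFunOn.1 ⟨hq, hqV, hqV'⟩)⟩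

end GermBiLipschitzEquiv

end Germs

lemma exists_isBiLipschitzOn_ball_of_hasStrictDerivAt {E : Type*} [NormedAddCommGroup E]
    [NormedSpace ℂ E] {γ : ℂ → E} {γ' : E} {z₀ : ℂ} (hγ : HasStrictDerivAt γ γ' z₀)
    (hγ' : γ' ≠ 0) : ∃ r > 0, IsBiLipschitzOn γ (ball z₀ r) (γ '' ball z₀ r) := by
  obtain ⟨hup, hlow⟩ := hγ.isTheta_sub hγ'
  obtain ⟨C, hC⟩ := hup.bound
  obtain ⟨D, hD⟩ := hlow.bound
  set K := max 1 (max C D)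
  have hK : 0 < K := one_pos.trans_le (le_max_left _ _)
  have hev : ∀ᶠ z : ℂ × ℂ in 𝓝 z₀ ×ˢ 𝓝 z₀,
      K⁻¹ * ‖z.1 - z.2‖ ≤ ‖γ z.1 - γ z.2‖ ∧ ‖γ z.1 - γ z.2‖ ≤ K * ‖z.1 - z.2‖ := by
    rw [← nhds_prod_eq]
    filter_upwards [hC, hD] with z hzC hzD
    refine ⟨(inv_mul_le_iff₀ hK).2 (hzD.trans ?_), hzC.trans ?_⟩ <;> gcongr <;> simp [K]
  obtain ⟨t, ht, hbound⟩ := eventually_prod_self_iff'.1 hev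
  obtain ⟨r, hr, hrt⟩ := Metric.mem_nhds_iff.1 ht
  have hlip := fun z hz z' hz' ↦ hbound z (hrt hz) z' (hrt hz')
  refine ⟨r, hr, InjOn.bijOn_image fun z hz z' hz' hzz' ↦ ?_, K, le_max_left _ _, hlip⟩
  have hle := (hlip z hz z' hz').1
  rw [hzz', sub_self, norm_zero, inv_mul_le_iff₀ hK, mul_zero] at hle
  exact sub_eq_zero.1 (norm_le_zero_iff.1 hle)

lemma MapsHomeomorphicallyOnto.exists_isOpen_image_eq {E : Type*} [TopologicalSpace E] {γ : ℂ → E}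
    {D B : Set ℂ} {Y U : Set E} (hγ : MapsHomeomorphicallyOnto γ D (Y ∩ U)) (hU : IsOpen U)
    (hB : IsOpen B) (hBD : B ⊆ D) : ∃ W, IsOpen W ∧ γ '' B = Y ∩ W := by
  obtain ⟨-, himage, -, σ, hσ, hσγ⟩ := hγ
  obtain ⟨W, hW, hpre⟩ := continuousOn_iff'.1 hσ B hB
  refine ⟨U ∩ W, hU.inter hW, ?_⟩
  have hleft : LeftInvOn σ γ D := hσγ
  rw [← inter_eq_left.2 hBD, hleft.image_inter', himage, hpre, inter_comm, inter_assoc]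

lemma IsRegularPoint.exists_germBiLipschitzEquiv {k : ℕ} {Y : Set (EuclideanSpace ℂ (Fin k))}
    {q : EuclideanSpace ℂ (Fin k)} (h : IsRegularPoint Y q) (hq : q ∈ Y) :
    ∃ z₀, GermBiLipschitzEquiv (univ : Set ℂ) z₀ Y q := by
  obtain ⟨U, D, γ, hU, hqU, hD, hdiff, -, hderiv, hhomeo⟩ := h
  obtain ⟨z₀, hz₀, rfl⟩ : q ∈ γ '' D := hhomeo.2.1.ge ⟨hq, hqU⟩
  obtain ⟨r, hr, hγ⟩ := exists_isBiLipschitzOn_ball_of_hasStrictDerivAt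
    (hdiff.analyticAt (hD.mem_nhds hz₀)).hasStrictDerivAt (hderiv z₀ hz₀)
  have hB : IsOpen (ball z₀ r ∩ D) := isOpen_ball.inter hD
  obtain ⟨W, hW, himage⟩ := hhomeo.exists_isOpen_image_eq hU hB inter_subset_right
  have hz₀B : z₀ ∈ ball z₀ r ∩ D := ⟨mem_ball_self hr, hz₀⟩
  refine ⟨z₀, _, W, hB, hW, hz₀B, (himage.le (mem_image_of_mem γ hz₀B)).2, γ, ?_, rfl⟩
  rw [univ_inter, ← himage]
  exact hγ.mono inter_subset_left

section PlaneGerms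

variable {E : Type*} [NormedAddCommGroup E] {X : Set E} {p : E} {z₀ : ℂ}

namespace GermBiLipschitzEquiv

lemma exists_ball (h : GermBiLipschitzEquiv (univ : Set ℂ) z₀ X p) {N : Set E} (hN : N ∈ 𝓝 p) :
    ∃ (φ : ℂ → E) (r : ℝ) (W : Set E), 0 < r ∧ IsOpen W ∧ p ∈ W ∧ X ∩ W ⊆ N ∧
      IsBiLipschitzOn φ (ball z₀ r) (X ∩ W) ∧ φ z₀ = p := by
  obtain ⟨U, V, hU, hV, hz₀, hpV, φ, hφ, rfl⟩ := h
  have hUz₀ : U ∈ 𝓝 z₀ := hU.mem_nhds hz₀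
  have hcont : ContinuousAt φ z₀ :=
    (univ_inter U ▸ hφ.continuousOn).continuousAt hUz₀
  obtain ⟨r, hr, hball⟩ := Metric.mem_nhds_iff.1 (inter_mem hUz₀ (hcont.preimage_mem_nhds hN))
  obtain ⟨W, hW, hpW, hφW⟩ :=
    hφ.exists_isOpen_inter hV isOpen_ball ⟨mem_univ z₀, hz₀⟩ (mem_ball_self hr)
  rw [univ_inter, inter_eq_right.2 fun z hz ↦ (hball hz).1] at hφW
  refine ⟨φ, r, W, hr, hW, hpW, ?_, hφW, rfl⟩
  rw [← hφW.1.image_eq]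
  exact image_subset_iff.2 fun z hz ↦ (hball hz).2

lemma exists_joinedIn_closedBall (h : GermBiLipschitzEquiv (univ : Set ℂ) z₀ X p) :
    ∃ K : ℝ, ∃ W ∈ 𝓝 p, ∀ x ∈ X ∩ W, ∀ x' ∈ X ∩ W,
      JoinedIn (X ∩ closedBall x (K * ‖x - x'‖)) x x' := by
  obtain ⟨φ, r, W, -, hW, hpW, -, hφ, -⟩ := h.exists_ball univ_mem
  have hcont := hφ.continuousOn
  obtain ⟨hbij, C, hC1, hC⟩ := hφ
  have hC0 : 0 < C := one_pos.trans_le hC1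
  refine ⟨C * C, W, hW.mem_nhds hpW, fun x hx x' hx' ↦ ?_⟩
  obtain ⟨z, hz, rfl⟩ := hbij.surjOn hx
  obtain ⟨z', hz', rfl⟩ := hbij.surjOn hx'
  have hseg : segment ℝ z z' ⊆ ball z₀ r := (convex_ball z₀ r).segment_subset hz hz'
  refine ((JoinedIn.of_segment_subset subset_rfl).map_continuousOn (hcont.mono hseg)).mono ?_
  rintro _ ⟨w, hw, rfl⟩
  refine ⟨(hbij.mapsTo (hseg hw)).1, mem_closedBall_iff_norm.2 ?_⟩
  calc ‖φ w - φ z‖ ≤ C * ‖w - z‖ := (hC w (hseg hw) z hz).2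
    _ ≤ C * ‖z - z'‖ := by
      rw [norm_sub_rev z]
      gcongr
      obtain ⟨t, ht, rfl⟩ := (segment_eq_image_lineMap ℝ z z').le hw
      rw [AffineMap.lineMap_apply, vsub_eq_sub, vadd_eq_add, add_sub_cancel_right, norm_smul]
      exact mul_le_of_le_one_left (norm_nonneg _) (abs_le.2 ⟨by linarith [ht.1], ht.2⟩)
    _ ≤ C * (C * ‖φ z - φ z'‖) := by
      gcongr
      exact (inv_mul_le_iff₀ hC0).1 (hC z hz z' hz').1
    _ = C * C * ‖φ z - φ z'‖ := (mul_assoc _ _ _).symm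

lemma eventually_accPt (h : GermBiLipschitzEquiv (univ : Set ℂ) z₀ X p) :
    ∀ᶠ x in 𝓝[X] p, AccPt x (𝓟 X) := by
  obtain ⟨φ, r, W, -, hW, hpW, -, hφ, -⟩ := h.exists_ball univ_mem
  filter_upwards [inter_mem_nhdsWithin X (hW.mem_nhds hpW)] with x hx
  obtain ⟨z, hz, rfl⟩ := hφ.1.surjOn hx
  have hball : ball z₀ r ∈ 𝓝 z := isOpen_ball.mem_nhds hz
  have hcont := (hφ.continuousOn.continuousAt hball).mono_left (nhdsWithin_le_nhds (s := {z}ᶜ))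
  have hmem : ∀ᶠ w in 𝓝[≠] z, φ w ≠ φ z ∧ φ w ∈ X := by
    filter_upwards [nhdsWithin_le_nhds hball, self_mem_nhdsWithin] with w hw hwz
    exact ⟨fun heq ↦ hwz (hφ.1.injOn hw hz heq), (hφ.1.mapsTo hw).1⟩
  exact accPt_iff_frequently.2 (hcont.frequently hmem.frequently)

end GermBiLipschitzEquiv

lemma isPreconnected_ball_diff_center (z₀ : ℂ) {r : ℝ} (hr : 0 < r) :
    IsPreconnected (ball z₀ r \ {z₀}) := by
  have hhalf : IsPreconnected {w : ℂ | w.re < Real.log r} :=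
    (convex_halfSpace_re_lt _).isPreconnected
  convert hhalf.image (fun w ↦ z₀ + Complex.exp w) (by fun_prop) using 1
  ext z
  rw [Set.mem_sdiff, mem_ball_iff_norm, mem_singleton_iff, mem_image]
  constructor
  · rintro ⟨hzr, hz⟩
    have hz0 : z - z₀ ≠ 0 := sub_ne_zero.2 hz
    exact ⟨Complex.log (z - z₀), (Complex.log_re _).trans_lt
      (Real.log_lt_log (norm_pos_iff.2 hz0) hzr), by rw [Complex.exp_log hz0, add_sub_cancel]⟩
  · rintro ⟨w, hw, rfl⟩
    rw [add_sub_cancel_left, Complex.norm_exp]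
    exact ⟨(Real.lt_log_iff_exp_lt hr).1 hw, by simp [Complex.exp_ne_zero]⟩

lemma GermBiLipschitzEquiv.exists_isPreconnected (h : GermBiLipschitzEquiv (univ : Set ℂ) z₀ X p)
    {N : Set E} (hN : N ∈ 𝓝[X \ {p}] p) :
    ∃ t ∈ 𝓝[X \ {p}] p, t ⊆ N ∧ IsPreconnected t := by
  obtain ⟨M, hM, hMN⟩ := mem_nhdsWithin_iff_exists_mem_nhds_inter.1 hN
  obtain ⟨φ, r, W, hr, hW, hpW, hWM, hφ, rfl⟩ := h.exists_ball hM
  have himage : φ '' (ball z₀ r \ {z₀}) = (X \ {φ z₀}) ∩ W := by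
    rw [hφ.1.injOn.image_sdiff_subset (singleton_subset_iff.2 (mem_ball_self hr)), hφ.1.image_eq,
      image_singleton, inter_sdiff_right_comm]
  refine ⟨_, inter_mem_nhdsWithin _ (hW.mem_nhds hpW), fun x hx ↦ ?_, ?_⟩
  · exact hMN ⟨hWM ⟨hx.1.1, hx.2⟩, hx.1⟩
  · rw [← himage]
    exact (isPreconnected_ball_diff_center z₀ hr).image φ (hφ.continuousOn.mono sdiff_subset)

end PlaneGerms

lemma exists_algHom_comp_eq_of_isIntegral {K A B : Type*} [Field K] [IsAlgClosed K] [CommRing A]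
    [Algebra K A] [CommRing B] [Algebra K B] {g : A →ₐ[K] B} (hinj : Function.Injective g)
    (hint : g.IsIntegral) (φ : A →ₐ[K] K) : ∃ ψ : B →ₐ[K] K, ψ.comp g = φ := by
  algebraize [g.toRingHom]
  have hmax : (RingHom.ker φ).IsMaximal :=
    RingHom.ker_isMaximal_of_surjective φ fun c ↦ ⟨algebraMap K A c, φ.commutes c⟩
  obtain ⟨M, hM, hMφ⟩ := Ideal.exists_ideal_over_maximal_of_isIntegral (S := B) (RingHom.ker φ)
    (((RingHom.injective_iff_ker_eq_bot g.toRingHom).1 hinj).le.trans bot_le)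
  let _ := Ideal.Quotient.field M
  have hg : ((Ideal.Quotient.mkₐ K M).comp g : A →+* B ⧸ M) =
      (algebraMap K (B ⧸ M)).comp (φ : A →+* K) := by
    ext a
    have hker : a - algebraMap K A (φ a) ∈ M.comap (algebraMap A B) := by simp [hMφ]
    have hmem : g a - algebraMap K B (φ a) ∈ M := by
      simpa only [map_sub, AlgHom.commutes] using (show g (a - algebraMap K A (φ a)) ∈ M from hker)
    exact Ideal.Quotient.eq.2 hmem
  have hKint : Algebra.IsIntegral K (B ⧸ M) := by
    refine ⟨fun y ↦ ?_⟩
    obtain ⟨b, rfl⟩ := Ideal.Quotient.mk_surjective y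
    obtain ⟨p, hp, hpb⟩ := hint b
    refine ⟨p.map φ, hp.map _, ?_⟩
    rw [Polynomial.eval₂_map, ← hg]
    exact (Polynomial.hom_eval₂ p (g : A →+* B) (Ideal.Quotient.mkₐ K M : B →+* B ⧸ M) b).symm.trans
      ((congrArg _ hpb).trans (map_zero _))
  let e := AlgEquiv.ofBijective (Algebra.ofId K (B ⧸ M))
    IsAlgClosed.algebraMap_bijective_of_isIntegral
  refine ⟨(e.symm : B ⧸ M →ₐ[K] K).comp (Ideal.Quotient.mkₐ K M), AlgHom.ext fun a ↦ ?_⟩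
  exact e.symm_apply_eq.2 (RingHom.congr_fun hg a)

lemma trdeg_eq_of_isIntegral {K A : Type*} [Field K] [CommRing A] [IsDomain A] [Algebra K A] {s : ℕ}
    {g : MvPolynomial (Fin s) K →ₐ[K] A} (hinj : Function.Injective g) (hint : g.IsIntegral) :
    Algebra.trdeg K A = s := by
  algebraize [g.toRingHom]
  have : FaithfulSMul (MvPolynomial (Fin s) K) A :=
    (faithfulSMul_iff_algebraMap_injective _ _).2 hinj
  have : IsScalarTower K (MvPolynomial (Fin s) K) A :=
    IsScalarTower.of_algebraMap_eq fun x ↦ (g.commutes x).symm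
  have hadd := lift_trdeg_add_eq K (MvPolynomial (Fin s) K) A
  rw [trdeg_eq_zero (R := MvPolynomial (Fin s) K)] at hadd
  simpa [MvPolynomial.trdeg_of_isDomain] using hadd.symm

section CoordinateRing

variable {k : ℕ} {C X : Set (EuclideanSpace ℂ (Fin k))}

/-- The ideal of polynomials vanishing on `X`, where `X` lives in `EuclideanSpace ℂ (Fin k)`
rather than in `Fin k → ℂ`. -/
def curveIdeal (X : Set (EuclideanSpace ℂ (Fin k))) : Ideal (MvPolynomial (Fin k) ℂ) :=
  MvPolynomial.vanishingIdeal ℂ (WithLp.ofLp '' X)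

lemma mem_curveIdeal {f : MvPolynomial (Fin k) ℂ} :
    f ∈ curveIdeal X ↔ ∀ x ∈ X, MvPolynomial.eval (fun i ↦ x i) f = 0 := by
  simp [curveIdeal, MvPolynomial.aeval_eq_eval]

lemma IsAlgebraicSet.mem_iff (hX : IsAlgebraicSet X) {x : EuclideanSpace ℂ (Fin k)} :
    x ∈ X ↔ ∀ f ∈ curveIdeal X, MvPolynomial.eval (fun i ↦ x i) f = 0 := by
  refine ⟨fun hx f hf ↦ mem_curveIdeal.1 hf x hx, fun h ↦ ?_⟩
  obtain ⟨S, rfl⟩ := hX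
  exact fun f hf ↦ h f (mem_curveIdeal.2 fun x hx ↦ hx f hf)

lemma IsAlgebraicSet.exists_mem_eval_eq (hC : IsAlgebraicSet C)
    (ψ : MvPolynomial (Fin k) ℂ ⧸ curveIdeal C →ₐ[ℂ] ℂ) :
    ∃ x ∈ C, ∀ f, MvPolynomial.eval (fun i ↦ x i) f = ψ (Ideal.Quotient.mk _ f) := by
  let x : EuclideanSpace ℂ (Fin k) := WithLp.toLp 2 fun i ↦ ψ (Ideal.Quotient.mk _ (.X i))
  have hx : MvPolynomial.aeval (fun i ↦ x i) = ψ.comp (Ideal.Quotient.mkₐ ℂ (curveIdeal C)) :=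
    MvPolynomial.algHom_ext fun i ↦ by simp [x]
  have heval : ∀ f, MvPolynomial.eval (fun i ↦ x i) f = ψ (Ideal.Quotient.mk _ f) :=
    fun f ↦ AlgHom.congr_fun hx f
  refine ⟨x, hC.mem_iff.2 fun f hf ↦ ?_, heval⟩
  rw [heval, Ideal.Quotient.eq_zero_iff_mem.2 hf, map_zero]

namespace IsIrreducibleAlgebraicCurve

lemma finite_zeros (hC : IsIrreducibleAlgebraicCurve C) {f : MvPolynomial (Fin k) ℂ}
    (hf : f ∉ curveIdeal C) : {x ∈ C | MvPolynomial.eval (fun i ↦ x i) f = 0}.Finite := by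
  classical
  obtain ⟨⟨S, hS⟩, -, hfinite⟩ := hC
  refine hfinite _ ⟨insert f S, ?_⟩ ⟨fun x hx ↦ hx.1, fun hsub ↦ hf ?_⟩
  · ext x
    simp [hS, and_comm]
  · exact mem_curveIdeal.2 fun x hx ↦ (hsub hx).2

lemma isPrime_curveIdeal (hC : IsIrreducibleAlgebraicCurve C) : (curveIdeal C).IsPrime := by
  refine Ideal.isPrime_iff.2 ⟨(Ideal.ne_top_iff_one _).2 fun hone ↦ ?_, fun {f g} hfg ↦ ?_⟩
  · obtain ⟨x, hx⟩ := hC.2.1.nonempty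
    simpa using mem_curveIdeal.1 hone x hx
  · by_contra! hcon
    refine hC.2.1 (((hC.finite_zeros hcon.1).union (hC.finite_zeros hcon.2)).subset fun x hx ↦ ?_)
    have hmul := mem_curveIdeal.1 hfg x hx
    rw [map_mul, mul_eq_zero] at hmul
    exact hmul.imp (⟨hx, ·⟩) (⟨hx, ·⟩)

/-- If `s ≥ 2`, the function on `C` corresponding to the second coordinate would take
all complex values on the finite set of zeros of the first. -/
lemma le_one_of_isIntegral (hC : IsIrreducibleAlgebraicCurve C) {s : ℕ}
    {g : MvPolynomial (Fin s) ℂ →ₐ[ℂ] MvPolynomial (Fin k) ℂ ⧸ curveIdeal C}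
    (hinj : Function.Injective g) (hint : g.IsIntegral) : s ≤ 1 := by
  by_contra! hs
  let i₀ : Fin s := ⟨0, by lia⟩
  let i₁ : Fin s := ⟨1, hs⟩
  obtain ⟨f₀, hf₀⟩ := Ideal.Quotient.mk_surjective (g (.X i₀))
  obtain ⟨f₁, hf₁⟩ := Ideal.Quotient.mk_surjective (g (.X i₁))
  have hf₀C : f₀ ∉ curveIdeal C := fun hmem ↦ MvPolynomial.X_ne_zero i₀ <| hinj <| by
    rw [← hf₀, Ideal.Quotient.eq_zero_iff_mem.2 hmem, map_zero]
  refine infinite_univ (((hC.finite_zeros hf₀C).image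
    fun x ↦ MvPolynomial.eval (fun i ↦ x i) f₁).subset fun b _ ↦ ?_)
  obtain ⟨ψ, hψ⟩ := exists_algHom_comp_eq_of_isIntegral hinj hint
    (MvPolynomial.aeval (Pi.single i₁ b))
  obtain ⟨x, hxC, hx⟩ := hC.1.exists_mem_eval_eq ψ
  have hψX : ∀ i, ψ (g (.X i)) = Pi.single (M := fun _ ↦ ℂ) i₁ b i := fun i ↦ by
    simpa using AlgHom.congr_fun hψ (.X i)
  refine ⟨x, ⟨hxC, ?_⟩, ?_⟩
  · rw [hx, hf₀, hψX, Pi.single_eq_of_ne (by simp [i₀, i₁])]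
  · exact (hx f₁).trans (by rw [hf₁, hψX, Pi.single_eq_same])

lemma exists_eval_pair_eq_zero (hC : IsIrreducibleAlgebraicCurve C) (u v : MvPolynomial (Fin k) ℂ) :
    ∃ P : MvPolynomial (Fin 2) ℂ, P ≠ 0 ∧ ∀ x ∈ C, MvPolynomial.eval
      ![MvPolynomial.eval (fun i ↦ x i) u, MvPolynomial.eval (fun i ↦ x i) v] P = 0 := by
  have := hC.isPrime_curveIdeal
  obtain ⟨s, g, hinj, hint⟩ :=
    exists_integral_inj_algHom_of_fg ℂ (MvPolynomial (Fin k) ℂ ⧸ curveIdeal C)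
  have hs := hC.le_one_of_isIntegral hinj hint
  have hdep : ¬ AlgebraicIndependent ℂ fun i ↦ Ideal.Quotient.mkₐ ℂ (curveIdeal C) (![u, v] i) := by
    intro hindep
    have hle := hindep.lift_cardinalMk_le_trdeg
    rw [trdeg_eq_of_isIntegral hinj hint] at hle
    have : 2 ≤ s := by simpa using hle
    lia
  rw [algebraicIndependent_iff] at hdep
  push Not at hdep
  obtain ⟨P, hP, hP0⟩ := hdep
  refine ⟨P, hP0, fun x hx ↦ ?_⟩
  rw [← MvPolynomial.comp_aeval_apply, Ideal.Quotient.mkₐ_eq_mk, Ideal.Quotient.eq_zero_iff_mem,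
    mem_curveIdeal] at hP
  have hPx := hP x hx
  rw [← MvPolynomial.aeval_eq_eval, MvPolynomial.comp_aeval_apply] at hPx
  convert hPx using 1
  rw [MvPolynomial.aeval_eq_eval]
  congr 2
  exact funext (Fin.forall_fin_two.2 ⟨rfl, rfl⟩)

end IsIrreducibleAlgebraicCurve

lemma IsAlgebraicCurve.exists_eval_pair_eq_zero (hX : IsAlgebraicCurve X)
    (u v : MvPolynomial (Fin k) ℂ) :
    ∃ P : MvPolynomial (Fin 2) ℂ, P ≠ 0 ∧ ∀ x ∈ X, MvPolynomial.eval
      ![MvPolynomial.eval (fun i ↦ x i) u, MvPolynomial.eval (fun i ↦ x i) v] P = 0 := by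
  obtain ⟨F, hF, rfl⟩ := hX
  choose! P hP0 hP using fun C hC ↦ (hF C hC).exists_eval_pair_eq_zero u v
  refine ⟨∏ C ∈ F, P C, Finset.prod_ne_zero_iff.2 hP0, fun x hx ↦ ?_⟩
  obtain ⟨C, hC, hxC⟩ := mem_iUnion₂.1 hx
  rw [map_prod]
  exact Finset.prod_eq_zero hC (hP C hC x hxC)

lemma IsAlgebraicSet.isClosed (hX : IsAlgebraicSet X) : IsClosed X := by
  obtain ⟨S, rfl⟩ := hX
  simp only [ofPred_forall]
  refine isClosed_biInter fun f _ ↦ isClosed_eq (f.continuous_eval.comp ?_) continuous_const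
  fun_prop

lemma IsAlgebraicCurve.isClosed (hX : IsAlgebraicCurve X) : IsClosed X := by
  obtain ⟨F, hF, rfl⟩ := hX
  exact F.finite_toSet.isClosed_biUnion fun C hC ↦ (hF C hC).1.isClosed

end CoordinateRing

section BranchValues

open Polynomial Polynomial.Bivariate

lemma exists_dvd_C_mul_pow_and_bezout_derivative {A : Type*} [CommRing A] [IsDomain A] [CharZero A]
    {P : A[X]} (hP : P ≠ 0) : ∃ (d : A) (N : ℕ) (g a b : A[X]), d ≠ 0 ∧ P ∣ C d * g ^ N ∧
      a * g + b * derivative g = C d := by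
  classical
  let K := FractionRing A
  have hinj : Function.Injective (algebraMap A K) := FaithfulSMul.algebraMap_injective A K
  have clear (f : K[X]) : ∃ c : A, c ≠ 0 ∧ ∃ F : A[X], F.map (algebraMap A K) =
      C (algebraMap A K c) * f := by
    obtain ⟨c, hc, h⟩ := IsLocalization.integerNormalization_spec (nonZeroDivisors A) f
    exact ⟨c, nonZeroDivisors.ne_zero hc, _, h.trans (by rw [← smul_eq_C_mul, algebraMap_smul])⟩
  have hPK : P.map (algebraMap A K) ≠ 0 := (Polynomial.map_ne_zero_iff hinj).2 hP
  set g₀ := UniqueFactorizationMonoid.radical (P.map (algebraMap A K))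
  obtain ⟨a₀, b₀, hab⟩ : g₀.Separable :=
    PerfectField.separable_iff_squarefree.2 UniqueFactorizationMonoid.squarefree_radical
  obtain ⟨N, c₀, hc₀⟩ := UniqueFactorizationMonoid.exists_dvd_radical_self_pow hPK
  obtain ⟨α, hα, a, ha⟩ := clear a₀
  obtain ⟨β, hβ, b, hb⟩ := clear b₀
  obtain ⟨γ, hγ, g, hg⟩ := clear g₀
  obtain ⟨δ, hδ, c, hc⟩ := clear c₀
  have hg' : (derivative g).map (algebraMap A K) = C (algebraMap A K γ) * derivative g₀ := by
    rw [← derivative_map, hg, derivative_C_mul]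
  refine ⟨α * β * γ * δ, N, g, C (β * δ) * a, C (α * δ) * b, by simp [*],
    ⟨C (α * β * γ) * C γ ^ N * c, ?_⟩, ?_⟩
  · refine Polynomial.map_injective _ hinj ?_
    simp only [Polynomial.map_mul, Polynomial.map_pow, Polynomial.map_C, map_mul, hg, hc]
    linear_combination C (algebraMap A K α) * C (algebraMap A K β) * C (algebraMap A K γ) *
      C (algebraMap A K δ) * C (algebraMap A K γ) ^ N * hc₀
  · refine Polynomial.map_injective _ hinj ?_
    simp only [Polynomial.map_add, Polynomial.map_mul, Polynomial.map_C, map_mul, ha, hb, hg, hg']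
    linear_combination C (algebraMap A K α) * C (algebraMap A K β) * C (algebraMap A K γ) *
      C (algebraMap A K δ) * hab

lemma eval_equivMvPolynomial {R : Type*} [CommRing R] (Q : R[X][Y]) (w t : R) :
    MvPolynomial.eval ![w, t] (equivMvPolynomial R Q) = Q.evalEval w t := by
  have h : ((MvPolynomial.aeval ![w, t]).comp (equivMvPolynomial R).toAlgHom) =
      aevalAeval w t := by
    ext <;> simp
  rw [← coe_aevalAeval_eq_evalEval, ← h, ← MvPolynomial.aeval_eq_eval]
  rfl

variable {𝕜 : Type*} [RCLike 𝕜]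

lemma analyticAt_evalEval (Q : 𝕜[X][Y]) (z : 𝕜 × 𝕜) :
    AnalyticAt 𝕜 (fun v ↦ Q.evalEval v.1 v.2) z := by
  have h := AnalyticAt.aeval_mvPolynomial (𝕜 := 𝕜) (f := fun (v : 𝕜 × 𝕜) i ↦ ![v.1, v.2] i)
    (z := z) (by simp [Fin.forall_fin_two, analyticAt_fst, analyticAt_snd])
    (equivMvPolynomial 𝕜 Q)
  simpa [MvPolynomial.aeval_eq_eval, eval_equivMvPolynomial] using h

lemma hasDerivAt_evalEval (Q : 𝕜[X][Y]) (w t : 𝕜) :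
    HasDerivAt (fun t ↦ Q.evalEval w t) ((derivative Q).evalEval w t) t := by
  simpa only [derivative_map, map_evalRingHom_eval] using
    (Q.map (evalRingHom w)).hasDerivAt t

lemma exists_analyticAt_of_evalEval_eq_zero {Q : 𝕜[X][Y]} {w t : 𝕜} (h₀ : Q.evalEval w t = 0)
    (h₁ : (derivative Q).evalEval w t ≠ 0) :
    ∃ g : 𝕜 → 𝕜, AnalyticAt 𝕜 g w ∧
      ∀ᶠ v in 𝓝 (w, t), Q.evalEval v.1 v.2 = 0 → g v.1 = v.2 := by
  have hQ := (analyticAt_evalEval Q (w, t)).contDiffAt (n := ⊤)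
  have hpartial : fderiv 𝕜 (fun v : 𝕜 × 𝕜 ↦ Q.evalEval v.1 v.2) (w, t) ∘L .inr 𝕜 𝕜 𝕜 =
      .toSpanSingleton 𝕜 ((derivative Q).evalEval w t) :=
    (((analyticAt_evalEval Q (w, t)).differentiableAt.hasFDerivAt).comp t
      (hasFDerivAt_prodMk_right w t)).unique (hasDerivAt_evalEval Q w t).hasFDerivAt
  have hinv : (fderiv 𝕜 (fun v : 𝕜 × 𝕜 ↦ Q.evalEval v.1 v.2) (w, t) ∘L
      .inr 𝕜 𝕜 𝕜).IsInvertible := by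
    rw [hpartial]
    exact ⟨ContinuousLinearEquiv.unitsEquivAut 𝕜 (Units.mk0 _ h₁), by ext; simp⟩
  refine ⟨hQ.implicitFunction (by simp) hinv, ?_, ?_⟩
  · exact (hQ.contDiffAt_implicitFunction (by simp) hinv).analyticAt
  · filter_upwards [hQ.eventually_apply_eq_iff_implicitFunction (by simp) hinv] with v hv hv₀
    exact hv.1 (hv₀.trans h₀.symm)

lemma exists_finite_forall_exists_analyticAt_of_eval_eq_zero {P : MvPolynomial (Fin 2) 𝕜}
    (hP : P ≠ 0) : ∃ B : Set 𝕜, B.Finite ∧ ∀ w ∉ B, ∀ t, MvPolynomial.eval ![w, t] P = 0 →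
      ∃ g : 𝕜 → 𝕜, AnalyticAt 𝕜 g w ∧
        ∀ᶠ v : 𝕜 × 𝕜 in 𝓝 (w, t), MvPolynomial.eval ![v.1, v.2] P = 0 → g v.1 = v.2 := by
  obtain ⟨Q, rfl⟩ := (equivMvPolynomial 𝕜).surjective P
  simp only [eval_equivMvPolynomial]
  obtain ⟨d, N, g, a, b, hd, hdvd, hbez⟩ := exists_dvd_C_mul_pow_and_bezout_derivative
    (ne_zero_of_map hP)
  have hroot {w t : 𝕜} (hw : d.eval w ≠ 0) (h : Q.evalEval w t = 0) : g.evalEval w t = 0 := by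
    have := evalEval_dvd w t hdvd
    rw [h, zero_dvd_iff, evalEval_mul, evalEval_C, evalEval_pow, mul_eq_zero] at this
    exact eq_zero_of_pow_eq_zero (this.resolve_left hw)
  refine ⟨{w | d.IsRoot w}, Polynomial.finite_setOfPred_isRoot hd, fun w hw t ht ↦ ?_⟩
  have hg := hroot hw ht
  have hg' : (derivative g).evalEval w t ≠ 0 := by
    intro h
    have := congrArg (evalEval w t) hbez
    rw [evalEval_add, evalEval_mul, evalEval_mul, hg, h, evalEval_C] at this
    exact hw (by simpa using this.symm)
  obtain ⟨φ, hφ, hev⟩ := exists_analyticAt_of_evalEval_eq_zero hg hg'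
  refine ⟨φ, hφ, ?_⟩
  filter_upwards [hev, (d.continuous.comp continuous_fst).continuousAt.eventually_ne hw]
    with v hv hdv hQv using hv (hroot hdv hQv)

end BranchValues

section Sections

lemma analyticAt_euclidean {𝕜 ι E : Type*} [RCLike 𝕜] [Fintype ι] [NormedAddCommGroup E]
    [NormedSpace 𝕜 E] {s : E → EuclideanSpace 𝕜 ι} {w : E} :
    AnalyticAt 𝕜 s w ↔ ∀ i, AnalyticAt 𝕜 (fun u ↦ s u i) w := by
  rw [← analyticAt_pi_iff]
  exact ⟨fun h ↦ ((EuclideanSpace.equiv ι 𝕜).analyticAt _).comp h,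
    fun h ↦ ((EuclideanSpace.equiv ι 𝕜).symm.analyticAt _).comp h⟩

variable {k : ℕ} {X : Set (EuclideanSpace ℂ (Fin k))}

lemma exists_mvPolynomial_eval_eq (ℓ : EuclideanSpace ℂ (Fin k) →L[ℂ] ℂ) :
    ∃ f : MvPolynomial (Fin k) ℂ, ∀ x, MvPolynomial.eval (fun i ↦ x i) f = ℓ x := by
  refine ⟨∑ i, MvPolynomial.C (ℓ (EuclideanSpace.single i 1)) * MvPolynomial.X i, fun x ↦ ?_⟩
  conv_rhs => rw [← (EuclideanSpace.basisFun (Fin k) ℂ).sum_repr x]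
  simp [mul_comm]

lemma IsAlgebraicSet.eventually_mem_of_frequently (hX : IsAlgebraicSet X)
    {s : ℂ → EuclideanSpace ℂ (Fin k)} {w : ℂ} (hs : AnalyticAt ℂ s w)
    (hfreq : ∃ᶠ u in 𝓝[≠] w, s u ∈ X) : ∀ᶠ u in 𝓝 w, s u ∈ X := by
  obtain ⟨S, rfl⟩ := hX
  refine (eventually_all_finset S).2 fun f hf ↦ ?_
  have hf_an : AnalyticAt ℂ (fun u ↦ MvPolynomial.eval (fun i ↦ s u i) f) w := by
    simpa [MvPolynomial.aeval_eq_eval] using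
      AnalyticAt.aeval_mvPolynomial (f := fun u i ↦ s u i) (analyticAt_euclidean.1 hs) f
  exact hf_an.frequently_zero_iff_eventually_zero.1 (hfreq.mono fun u hu ↦ hu f hf)

lemma IsAlgebraicCurve.eventually_mem_of_frequently (hX : IsAlgebraicCurve X)
    {s : ℂ → EuclideanSpace ℂ (Fin k)} {w : ℂ} (hs : AnalyticAt ℂ s w)
    (hfreq : ∃ᶠ u in 𝓝[≠] w, s u ∈ X) : ∀ᶠ u in 𝓝 w, s u ∈ X := by
  obtain ⟨F, hF, rfl⟩ := hX
  obtain ⟨C, hC, hfreqC⟩ : ∃ C ∈ F, ∃ᶠ u in 𝓝[≠] w, s u ∈ C := by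
    by_contra! hcon
    refine hfreq (((eventually_all_finset F).2 hcon).mono fun u hu hmem ↦ ?_)
    obtain ⟨C, hC, huC⟩ := mem_iUnion₂.1 hmem
    exact hu C hC huC
  filter_upwards [(hF C hC).1.eventually_mem_of_frequently hs hfreqC] with u hu
  exact mem_iUnion₂.2 ⟨C, hC, hu⟩

lemma IsAlgebraicCurve.exists_finite_forall_exists_analyticAt (hX : IsAlgebraicCurve X)
    (ℓ : EuclideanSpace ℂ (Fin k) →L[ℂ] ℂ) :
    ∃ B : Set ℂ, B.Finite ∧ ∀ x ∈ X, ℓ x ∉ B → ∃ s : ℂ → EuclideanSpace ℂ (Fin k),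
      AnalyticAt ℂ s (ℓ x) ∧ ∀ᶠ y in 𝓝[X] x, s (ℓ y) = y := by
  obtain ⟨f, hf⟩ := exists_mvPolynomial_eval_eq ℓ
  choose P hP₀ hP using fun i : Fin k ↦ hX.exists_eval_pair_eq_zero f (.X i)
  simp only [hf, MvPolynomial.eval_X] at hP
  choose B hB hsec using fun i ↦ exists_finite_forall_exists_analyticAt_of_eval_eq_zero (hP₀ i)
  refine ⟨⋃ i, B i, finite_iUnion hB, fun x hx hxB ↦ ?_⟩
  rw [mem_iUnion, not_exists] at hxB
  choose g hg hgev using fun i ↦ hsec i (ℓ x) (hxB i) (x i) (hP i x hx)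
  refine ⟨fun w ↦ WithLp.toLp 2 fun i ↦ g i w, analyticAt_euclidean.2 hg, ?_⟩
  have hcoord : ∀ᶠ y in 𝓝[X] x, ∀ i, g i (ℓ y) = y i := by
    refine eventually_all.2 fun i ↦ ?_
    have hpair : ContinuousAt (fun y : EuclideanSpace ℂ (Fin k) ↦ (ℓ y, y i)) x := by fun_prop
    filter_upwards [nhdsWithin_le_nhds (hpair.eventually (hgev i)), self_mem_nhdsWithin]
      with y hy hyX using hy (hP i y hyX)
  filter_upwards [hcoord] with y hy
  ext i
  exact hy i

/-- Near `x`, the set `X` is the graph over `ℂ` of a holomorphic section of `ℓ`. -/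
def HasHolomorphicSectionAt {E : Type*} [NormedAddCommGroup E] [NormedSpace ℂ E] (ℓ : E → ℂ)
    (X : Set E) (x : E) : Prop :=
  ∃ s : ℂ → E, AnalyticAt ℂ s (ℓ x) ∧ (∀ᶠ w in 𝓝 (ℓ x), s w ∈ X ∧ ℓ (s w) = w) ∧
    ∀ᶠ y in 𝓝[X] x, s (ℓ y) = y

lemma IsAlgebraicCurve.exists_finite_forall_hasHolomorphicSectionAt (hX : IsAlgebraicCurve X)
    (ℓ : EuclideanSpace ℂ (Fin k) →L[ℂ] ℂ) :
    ∃ B : Set ℂ, B.Finite ∧ ∀ x ∈ X, ℓ x ∉ B → AccPt x (𝓟 X) →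
      HasHolomorphicSectionAt ℓ X x := by
  obtain ⟨B, hB, hsec⟩ := hX.exists_finite_forall_exists_analyticAt ℓ
  refine ⟨B, hB, fun x hx hxB hacc ↦ ?_⟩
  obtain ⟨s, hs, hsℓ⟩ := hsec x hx hxB
  have hsx : s (ℓ x) = x := hsℓ.self_of_nhdsWithin hx
  have hℓ : Tendsto ℓ (𝓝[X \ {x}] x) (𝓝[≠] (ℓ x)) := by
    refine tendsto_nhdsWithin_iff.2 ⟨ℓ.continuous.continuousAt.mono_left nhdsWithin_le_nhds, ?_⟩
    filter_upwards [hsℓ.filter_mono (nhdsWithin_mono x sdiff_subset), self_mem_nhdsWithin]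
      with y hy hyX hyx
    exact hyX.2 (by rw [mem_singleton_iff, ← hy, ← hsx, mem_singleton_iff.1 hyx, hsx])
  have : (𝓝[X \ {x}] x).NeBot := by
    rwa [accPt_principal_iff_nhdsWithin] at hacc
  have hfreq : ∃ᶠ w in 𝓝[≠] (ℓ x), s w ∈ X ∧ ℓ (s w) - w = 0 := by
    refine hℓ.frequently (Eventually.frequently ?_)
    filter_upwards [hsℓ.filter_mono (nhdsWithin_mono x sdiff_subset), self_mem_nhdsWithin]
      with y hy hyX
    rw [hy]
    exact ⟨hyX.1, sub_self _⟩
  have hsection : AnalyticAt ℂ (fun w ↦ ℓ (s w) - w) (ℓ x) :=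
    ((ℓ.analyticAt _).comp hs).sub analyticAt_id
  refine ⟨s, hs, ?_, hsℓ⟩
  filter_upwards [hX.eventually_mem_of_frequently hs (hfreq.mono fun _ h ↦ h.1),
    hsection.frequently_zero_iff_eventually_zero.1 (hfreq.mono fun _ h ↦ h.2)] with w hwX hw
  exact ⟨hwX, sub_eq_zero.1 hw⟩

end Sections

section TangentLine

open Polynomial Polynomial.Bivariate in
lemma exists_strictTransform {𝕜 : Type*} [Field 𝕜] [Infinite 𝕜] {P : MvPolynomial (Fin 2) 𝕜}
    (hP : P ≠ 0) : ∃ R : 𝕜[X][Y], R.coeff 0 ≠ 0 ∧ ∀ a b, b ≠ 0 →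
      MvPolynomial.eval ![a * b, b] P = 0 → R.evalEval a b = 0 := by
  let S : 𝕜[X][Y] := MvPolynomial.aeval ![C X * Y, Y] P
  have hS (a b : 𝕜) : S.evalEval a b = MvPolynomial.eval ![a * b, b] P := by
    have h : (aevalAeval a b).comp (MvPolynomial.aeval (R := 𝕜) ![C X * Y, Y]) =
        MvPolynomial.aeval ![a * b, b] :=
      MvPolynomial.algHom_ext (Fin.forall_fin_two.2 ⟨by simp; ring, by simp⟩)
    rw [← coe_aevalAeval_eq_evalEval, ← MvPolynomial.aeval_eq_eval]
    exact AlgHom.congr_fun h P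
  have hS₀ : S ≠ 0 := by
    intro h
    refine mul_ne_zero hP (MvPolynomial.X_ne_zero 1) (MvPolynomial.funext fun v ↦ ?_)
    rw [map_mul, map_zero, MvPolynomial.eval_X, mul_eq_zero, or_iff_not_imp_right]
    intro hv
    have := hS (v 0 / v 1) (v 1)
    rw [h, evalEval_zero, div_mul_cancel₀ _ hv] at this
    rw [this]
    congr 2
    exact funext (Fin.forall_fin_two.2 ⟨rfl, rfl⟩)
  obtain ⟨R, hR, hdvd⟩ := exists_eq_pow_rootMultiplicity_mul_and_not_dvd S hS₀ 0
  rw [C_0, sub_zero] at hR hdvd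
  refine ⟨R, fun h ↦ hdvd (X_dvd_iff.2 h), fun a b hb hab ↦ ?_⟩
  rw [← hS, hR, evalEval_mul, evalEval_pow, evalEval_X] at hab
  exact (mul_eq_zero.1 hab).resolve_left (pow_ne_zero _ hb)

lemma exists_tendsto_of_finite_mapClusterPt {α T : Type*} [TopologicalSpace T] [T2Space T]
    {F : Filter α} [F.NeBot] {M : α → T} {S : Set T} (hS : IsCompact S) (hMS : ∀ᶠ x in F, M x ∈ S)
    (hfin : {y | MapClusterPt y F M}.Finite)
    (hconn : ∀ N ∈ F, ∃ t ∈ F, t ⊆ N ∧ IsPreconnected (M '' t)) :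
    ∃ y ∈ S, Tendsto M F (𝓝 y) := by
  obtain ⟨y, hyS, hy⟩ := hS.exists_mapClusterPt_of_frequently hMS.frequently
  obtain ⟨U, V, hU, hV, hyU, hZV, hUV⟩ := SeparatedNhds.of_isCompact_isCompact
    (isCompact_singleton (x := y)) (hfin.sdiff (t := {y})).isCompact disjoint_sdiff_right
  have hcover : ∀ᶠ x in F, M x ∈ U ∪ V := by
    refine (hS.tendsto_nhdsSet_of_mapClusterPt (s' := {y | MapClusterPt y F M}) hMS
      fun z _ hz ↦ hz).eventually_mem ((hU.union hV).mem_nhdsSet.2 fun z hz ↦ ?_)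
    exact (eq_or_ne z y).imp (fun h ↦ hyU h) fun h ↦ hZV ⟨hz, h⟩
  obtain ⟨t, htF, htUV, ht⟩ := hconn _ hcover
  have htU : M '' t ⊆ U := by
    refine ht.subset_left_of_subset_union hU hV hUV (image_subset_iff.2 htUV) ?_
    obtain ⟨x, hxU, hxt⟩ := ((hy.frequently (hU.mem_nhds (hyU rfl))).and_eventually htF).exists
    exact ⟨M x, mem_image_of_mem M hxt, hxU⟩
  refine ⟨y, hyS, hS.tendsto_nhds_of_unique_mapClusterPt hMS fun z _ hz ↦ ?_⟩
  by_contra hzy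
  obtain ⟨x, hxV, hxt⟩ := ((hz.frequently (hV.mem_nhds (hZV ⟨hz, hzy⟩))).and_eventually htF).exists
  exact hUV.le_bot ⟨htU (mem_image_of_mem M hxt), hxV⟩

open InnerProductSpace NormedSpace

lemma rankOne_smul_self {𝕜 E : Type*} [RCLike 𝕜] [NormedAddCommGroup E] [InnerProductSpace 𝕜 E]
    (c : 𝕜) (v : E) : rankOne 𝕜 (c • v) (c • v) = (‖c‖ ^ 2 : 𝕜) • rankOne 𝕜 v v := by
  rw [← RCLike.mul_conj]
  simp [smul_smul]

lemma finite_rankOne_of_finite_ratio {𝕜 ι : Type*} [RCLike 𝕜] [Fintype ι]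
    {L : Set (EuclideanSpace 𝕜 ι)} (hL : ∀ u ∈ L, ‖u‖ = 1)
    (hratio : ∀ i j, {c | ∃ u ∈ L, u j ≠ 0 ∧ u i / u j = c}.Finite) :
    ((fun u ↦ rankOne 𝕜 u u) '' L).Finite := by
  refine (finite_iUnion fun j ↦ (Finite.pi' fun i ↦ hratio i j).image fun v ↦
    let v' := WithLp.toLp 2 v
    (((‖v'‖ ^ 2)⁻¹ : ℝ) : 𝕜) • rankOne 𝕜 v' v').subset ?_
  rintro _ ⟨u, hu, rfl⟩
  obtain ⟨j, hj⟩ : ∃ j, u j ≠ 0 := by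
    by_contra! h
    have : u = 0 := by ext i; exact h i
    simpa [this] using hL u hu
  have hv : WithLp.toLp 2 (fun i ↦ u i / u j) = (u j)⁻¹ • u := by
    ext i
    simp [div_eq_inv_mul]
  refine mem_iUnion.2 ⟨j, fun i ↦ u i / u j, fun i ↦ ⟨u, hu, hj, rfl⟩, ?_⟩
  have hne : (‖(u j)⁻¹‖ ^ 2 : 𝕜) ≠ 0 := by simpa using hj
  simp only [hv, norm_smul, hL u hu, rankOne_smul_self, smul_smul, mul_one, RCLike.ofReal_inv,
    RCLike.ofReal_pow, inv_mul_cancel₀ hne, one_smul]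

lemma continuous_rankOne_self (𝕜 : Type*) {E : Type*} [RCLike 𝕜] [NormedAddCommGroup E]
    [InnerProductSpace 𝕜 E] : Continuous fun v : E ↦ rankOne 𝕜 v v := by
  have h : Continuous fun v : E ↦ ContinuousLinearMap.toSpanSingleton 𝕜 v :=
    (ContinuousLinearMap.toSpanSingletonCLE (𝕜 := 𝕜) (E := E)).continuous
  exact h.clm_comp (innerSL 𝕜).continuous

section LineProjection

variable {E : Type*} [NormedAddCommGroup E] [InnerProductSpace ℂ E]

/-- The orthogonal projection onto the complex line spanned by `v`; it stands for the point of
projective space determined by `v`. -/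
def lineProjection (v : E) : E →L[ℂ] E :=
  rankOne ℂ (normalize v) (normalize v)

lemma lineProjection_apply_self (v : E) : lineProjection v v = v := by
  rcases eq_or_ne v 0 with rfl | hv
  · exact map_zero _
  · have hinner : inner ℂ (normalize v) v = (‖v‖ : ℂ) := by
      conv_lhs => rw [← norm_smul_normalize v, normalize_smul_of_pos (norm_pos_iff.2 hv)]
      rw [normalize_normalize, ← Complex.coe_smul, inner_smul_right,
        inner_self_eq_norm_sq_to_K, norm_normalize hv]
      simp
    rw [lineProjection, rankOne_apply, hinner, Complex.coe_smul, norm_smul_normalize]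

lemma continuousAt_lineProjection {v : E} (hv : v ≠ 0) : ContinuousAt lineProjection v :=
  (continuous_rankOne_self ℂ).continuousAt.comp
    ((continuousAt_id.norm.inv₀ (norm_ne_zero_iff.2 hv)).smul continuousAt_id)

end LineProjection

variable {k : ℕ} {X : Set (EuclideanSpace ℂ (Fin k))} {p : EuclideanSpace ℂ (Fin k)}

lemma IsAlgebraicCurve.finite_ratio (hX : IsAlgebraicCurve X)
    (p : EuclideanSpace ℂ (Fin k)) (i j : Fin k) :
    {c | ∃ u : EuclideanSpace ℂ (Fin k), MapClusterPt u (𝓝[X] p) (fun x ↦ normalize (x - p)) ∧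
      u j ≠ 0 ∧ u i / u j = c}.Finite := by
  obtain ⟨P, hP₀, hP⟩ :=
    hX.exists_eval_pair_eq_zero (.X i - .C (p i)) (.X j - .C (p j))
  obtain ⟨R, hR₀, hR⟩ := exists_strictTransform hP₀
  refine (Polynomial.finite_setOfPred_isRoot hR₀).subset ?_
  rintro _ ⟨u, hu, hj, rfl⟩
  obtain ⟨F, hF, hu⟩ := mapClusterPt_iff_ultrafilter.1 hu
  have hcoord (i : Fin k) : Tendsto (fun x ↦ normalize (x - p) i) F (𝓝 (u i)) :=
    ((EuclideanSpace.proj (𝕜 := ℂ) i).continuous.tendsto u).comp hu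
  have hzero : Tendsto (fun x : EuclideanSpace ℂ (Fin k) ↦ x j - p j) F (𝓝 0) := by
    have : Continuous fun x : EuclideanSpace ℂ (Fin k) ↦ x j - p j := by fun_prop
    simpa using (this.tendsto p).mono_left (hF.trans nhdsWithin_le_nhds)
  have hlim := (analyticAt_evalEval R (u i / u j, 0)).continuousAt.tendsto.comp
    (((hcoord i).div (hcoord j) hj).prodMk_nhds hzero)
  have hvanish : ∀ᶠ x in F, R.evalEval (normalize (x - p) i / normalize (x - p) j) (x j - p j)
      = 0 := by
    filter_upwards [hF self_mem_nhdsWithin, (hcoord j).eventually_ne hj] with x hx hxj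
    have hsmul (i : Fin k) : normalize (x - p) i = ((‖x - p‖⁻¹ : ℝ) : ℂ) * (x i - p i) := rfl
    rw [hsmul, mul_ne_zero_iff] at hxj
    refine hR _ _ hxj.2 ?_
    rw [hsmul, hsmul, mul_div_mul_left _ _ hxj.1, div_mul_cancel₀ _ hxj.2]
    simpa using hP x hx
  have := tendsto_nhds_unique_of_eventuallyEq hlim tendsto_const_nhds hvanish
  simpa [Polynomial.evalEval, ← Polynomial.coeff_zero_eq_eval_zero] using this

lemma IsAlgebraicCurve.finite_mapClusterPt_lineProjection (hX : IsAlgebraicCurve X)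
    (p : EuclideanSpace ℂ (Fin k)) :
    {T | MapClusterPt T (𝓝[X \ {p}] p) fun x ↦ lineProjection (x - p)}.Finite := by
  refine (finite_rankOne_of_finite_ratio
    (L := {u | ‖u‖ = 1 ∧ MapClusterPt u (𝓝[X] p) fun x ↦ normalize (x - p)})
    (fun u hu ↦ hu.1) fun i j ↦ (hX.finite_ratio p i j).subset ?_).subset fun T hT ↦ ?_
  · rintro c ⟨u, hu, h⟩
    exact ⟨u, hu.2, h⟩
  · obtain ⟨F, hF, hT⟩ := mapClusterPt_iff_ultrafilter.1 hT
    have hsphere : ∀ᶠ x in F, normalize (x - p) ∈ sphere (0 : EuclideanSpace ℂ (Fin k)) 1 := by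
      filter_upwards [hF self_mem_nhdsWithin] with x hx
      rw [mem_sphere_zero_iff_norm, norm_normalize_eq_one_iff]
      exact sub_ne_zero.2 hx.2
    obtain ⟨u, hu, hFu⟩ :=
      (isCompact_sphere (0 : EuclideanSpace ℂ (Fin k)) 1).ultrafilter_le_nhds
        (F.map fun x ↦ normalize (x - p)) (tendsto_principal.2 hsphere)
    replace hFu : Tendsto (fun x ↦ normalize (x - p)) F (𝓝 u) := by
      rwa [Ultrafilter.coe_map] at hFu
    have hproj : Tendsto (fun x ↦ lineProjection (x - p)) F (𝓝 (rankOne ℂ u u)) :=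
      ((continuous_rankOne_self ℂ).tendsto u).comp hFu
    exact ⟨u, ⟨mem_sphere_zero_iff_norm.1 hu, mapClusterPt_iff_ultrafilter.2
      ⟨F, hF.trans (nhdsWithin_mono p sdiff_subset), hFu⟩⟩, tendsto_nhds_unique hproj hT⟩

lemma IsAlgebraicCurve.exists_tendsto_lineProjection (hX : IsAlgebraicCurve X)
    (hp : AccPt p (𝓟 X))
    (hconn : ∀ N ∈ 𝓝[X \ {p}] p, ∃ t ∈ 𝓝[X \ {p}] p, t ⊆ N ∧ IsPreconnected t) :
    ∃ e, ‖e‖ = 1 ∧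
      Tendsto (fun x ↦ lineProjection (x - p)) (𝓝[X \ {p}] p) (𝓝 (rankOne ℂ e e)) := by
  have : (𝓝[X \ {p}] p).NeBot := accPt_principal_iff_nhdsWithin.1 hp
  have hS : IsCompact ((fun u ↦ rankOne ℂ u u) '' sphere (0 : EuclideanSpace ℂ (Fin k)) 1) :=
    (isCompact_sphere 0 1).image (continuous_rankOne_self ℂ)
  have hmem : ∀ᶠ x in 𝓝[X \ {p}] p, lineProjection (x - p) ∈
      (fun u ↦ rankOne ℂ u u) '' sphere (0 : EuclideanSpace ℂ (Fin k)) 1 := by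
    filter_upwards [self_mem_nhdsWithin] with x hx
    exact ⟨normalize (x - p), by simpa [sub_eq_zero] using hx.2, rfl⟩
  have himage : ∀ N ∈ 𝓝[X \ {p}] p, ∃ t ∈ 𝓝[X \ {p}] p, t ⊆ N ∧
      IsPreconnected ((fun x ↦ lineProjection (x - p)) '' t) := by
    intro N hN
    obtain ⟨t, ht, htN, htconn⟩ := hconn _ (inter_mem hN self_mem_nhdsWithin)
    refine ⟨t, ht, fun x hx ↦ (htN hx).1, htconn.image _ fun x hx ↦ ?_⟩
    have hne : x - p ≠ 0 := sub_ne_zero.2 (htN hx).2.2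
    exact ((continuousAt_lineProjection hne).comp
      (f := fun x ↦ x - p) (continuousAt_id.sub continuousAt_const)).continuousWithinAt
  obtain ⟨_, ⟨e, he, rfl⟩, hlim⟩ := exists_tendsto_of_finite_mapClusterPt hS hmem
    (hX.finite_mapClusterPt_lineProjection p) himage
  exact ⟨e, mem_sphere_zero_iff_norm.1 he, hlim⟩

lemma IsAlgebraicCurve.exists_isLittleO_tangent (hX : IsAlgebraicCurve X)
    (hp : AccPt p (𝓟 X))
    (hconn : ∀ N ∈ 𝓝[X \ {p}] p, ∃ t ∈ 𝓝[X \ {p}] p, t ⊆ N ∧ IsPreconnected t) :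
    ∃ e, ‖e‖ = 1 ∧ (fun x ↦ x - p - innerSL ℂ e (x - p) • e) =o[𝓝[X] p] (· - p) := by
  obtain ⟨e, he, hlim⟩ := hX.exists_tendsto_lineProjection hp hconn
  refine ⟨e, he, isLittleO_iff.2 fun c hc ↦ ?_⟩
  have hclose : ∀ᶠ x in 𝓝[X \ {p}] p, ‖lineProjection (x - p) - rankOne ℂ e e‖ < c := by
    filter_upwards [hlim (ball_mem_nhds _ hc)] with x hx using mem_ball_iff_norm.1 hx
  have hins : 𝓝[X] p ≤ 𝓝[insert p (X \ {p})] p := nhdsWithin_mono _ fun x hx ↦ by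
    by_cases h : x = p <;> simp [h, hx]
  refine hins (mem_nhdsWithin_insert.2 ⟨by simp, ?_⟩)
  filter_upwards [hclose] with x hx
  calc ‖x - p - innerSL ℂ e (x - p) • e‖
      = ‖(lineProjection (x - p) - rankOne ℂ e e) (x - p)‖ := by
        rw [sub_apply, lineProjection_apply_self, rankOne_apply, innerSL_apply_apply]
    _ ≤ c * ‖x - p‖ := ContinuousLinearMap.le_of_opNorm_le _ hx.le _

end TangentLine

section BranchedCover

variable {E : Type*} [NormedAddCommGroup E] [NormedSpace ℂ E] {X S : Set E} {p e : E}
  {ℓ : E →L[ℂ] ℂ} {m : ℝ}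

lemma eventually_norm_sub_le_of_isLittleO (he : ‖e‖ = 1)
    (h : (fun x ↦ x - p - ℓ (x - p) • e) =o[𝓝[X] p] (· - p)) :
    ∀ᶠ x in 𝓝[X] p, ‖x - p‖ ≤ 2 * ‖ℓ x - ℓ p‖ := by
  filter_upwards [h.bound (c := 1 / 2) (by norm_num)] with x hx
  have hnorm : ‖ℓ (x - p) • e‖ = ‖ℓ x - ℓ p‖ := by rw [norm_smul, he, mul_one, map_sub]
  linarith [norm_sub_norm_le (x - p) (ℓ (x - p) • e)]

lemma exists_norm_sub_le_mul_of_isLittleO (he : ‖e‖ = 1)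
    (h : (fun x ↦ x - p - ℓ (x - p) • e) =o[𝓝[X] p] (· - p)) {ε : ℝ} (hε : 0 < ε) :
    ∃ N ∈ 𝓝 p, ∀ x ∈ X ∩ N, ∀ x' ∈ X ∩ N, ℓ x = ℓ x' → ‖x - x'‖ ≤ ε * ‖ℓ x - ℓ p‖ := by
  obtain ⟨N, hN, hNX⟩ := mem_nhdsWithin_iff_exists_mem_nhds_inter.1
    ((h.bound (c := ε / 4) (by positivity)).and (eventually_norm_sub_le_of_isLittleO he h))
  refine ⟨N, hN, fun x hx x' hx' hxx' ↦ ?_⟩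
  obtain ⟨hxo, hxp⟩ := hNX ⟨hx.2, hx.1⟩
  obtain ⟨hxo', hxp'⟩ := hNX ⟨hx'.2, hx'.1⟩
  rw [← hxx'] at hxp'
  have hsub : x - x' = (x - p - ℓ (x - p) • e) - (x' - p - ℓ (x' - p) • e) := by
    simp only [map_sub, hxx']
    abel
  calc ‖x - x'‖ ≤ ε / 4 * ‖x - p‖ + ε / 4 * ‖x' - p‖ := by
        rw [hsub]
        exact (norm_sub_le _ _).trans (add_le_add hxo hxo')
    _ ≤ ε / 4 * (2 * ‖ℓ x - ℓ p‖) + ε / 4 * (2 * ‖ℓ x - ℓ p‖) := by gcongr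
    _ = ε * ‖ℓ x - ℓ p‖ := by ring

lemma HasHolomorphicSectionAt.of_mem_nhdsWithin {x : E} (h : HasHolomorphicSectionAt ℓ X x)
    (hx : x ∈ X) (hSX : S ⊆ X) (hS : S ∈ 𝓝[X] x) : HasHolomorphicSectionAt ℓ S x := by
  obtain ⟨s, hs, hsX, hsℓ⟩ := h
  have hsx : s (ℓ x) = x := hsℓ.self_of_nhdsWithin hx
  have htendsto : Tendsto s (𝓝 (ℓ x)) (𝓝[X] x) := by
    refine tendsto_nhdsWithin_iff.2 ⟨?_, hsX.mono fun w hw ↦ hw.1⟩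
    simpa [hsx] using hs.continuousAt.tendsto
  refine ⟨s, hs, ?_, hsℓ.filter_mono (nhdsWithin_mono x hSX)⟩
  filter_upwards [hsX, htendsto.eventually_mem hS] with w hw hwS using ⟨hwS, hw.2⟩

lemma HasHolomorphicSectionAt.exists_openPartialHomeomorph (x : S)
    (h : HasHolomorphicSectionAt ℓ S x) :
    ∃ φ : OpenPartialHomeomorph S ℂ, x ∈ φ.source ∧ EqOn (fun y : S ↦ ℓ y) φ φ.source := by
  classical
  obtain ⟨s, hs, hsS, hsℓ⟩ := h
  obtain ⟨V, hV, hVo, hxV⟩ := _root_.eventually_nhds_iff.1 (hs.eventually_continuousAt.and hsS)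
  obtain ⟨W, hWo, hxW, hW⟩ := mem_nhdsWithin.1 hsℓ
  have hsV : ContinuousOn s V := fun w hw ↦ (hV w hw).1.continuousWithinAt
  have hℓ : Continuous fun y : S ↦ ℓ y := by fun_prop
  let σ : ℂ → S := fun w ↦ if hw : s w ∈ S then ⟨s w, hw⟩ else x
  have hσ : ∀ w ∈ V, (σ w : E) = s w := fun w hw ↦ by simp [σ, (hV w hw).2.1]
  let φ : OpenPartialHomeomorph S ℂ :=
    { toFun := fun y ↦ ℓ y
      invFun := σ
      source := {y | (y : E) ∈ W ∧ ℓ y ∈ V}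
      target := V ∩ s ⁻¹' W
      map_source' := fun y hy ↦ ⟨hy.2, by
        rw [mem_preimage, show s (ℓ y) = y from hW ⟨hy.1, y.2⟩]
        exact hy.1⟩
      map_target' := fun w hw ↦ by
        refine ⟨?_, ?_⟩ <;> rw [hσ w hw.1]
        · exact hw.2
        · rw [(hV w hw.1).2.2]
          exact hw.1
      left_inv' := fun y hy ↦ Subtype.ext ((hσ _ hy.2).trans (hW ⟨hy.1, y.2⟩))
      right_inv' := fun w hw ↦ by rw [hσ w hw.1, (hV w hw.1).2.2]
      open_source := (hWo.preimage continuous_subtype_val).inter (hVo.preimage hℓ)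
      open_target := hsV.isOpen_inter_preimage hVo hWo
      continuousOn_toFun := hℓ.continuousOn
      continuousOn_invFun := Topology.IsInducing.subtypeVal.continuousOn_iff.2
        ((hsV.congr hσ).mono inter_subset_left) }
  exact ⟨φ, ⟨hxW, hxV⟩, fun y _ ↦ rfl⟩

lemma eq_of_isCoveringMapOn_of_path {A B : Type*} [TopologicalSpace A] [TopologicalSpace B]
    {f : A → B} {s D : Set B} (hf : IsCoveringMapOn f s) (hD : D ⊆ s) [SimplyConnectedSpace D]
    [LocallyPathConnectedSpace D] (Γ : C(unitInterval, A)) (hΓ : ∀ t, f (Γ t) ∈ D)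
    (h01 : f (Γ 0) = f (Γ 1)) : Γ 0 = Γ 1 := by
  have hfΓ : Continuous fun t ↦ f (Γ t) :=
    hf.continuousOn.comp_continuous Γ.continuous fun t ↦ hD (hΓ t)
  obtain ⟨F, ⟨hF0, hF⟩, -⟩ := hf.existsUnique_continuousMap_lifts
    (⟨(↑), continuous_subtype_val⟩ : C(D, B)) (a₀ := ⟨f (Γ 0), hΓ 0⟩) (e₀ := Γ 0) rfl
    fun a ↦ hD a.2
  have : ContractibleSpace unitInterval :=
    (convex_Icc (0 : ℝ) 1).contractibleSpace (nonempty_Icc.2 zero_le_one)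
  have : LocallyPathConnectedSpace unitInterval := (convex_Icc (0 : ℝ) 1).locallyPathConnectedSpace
  let FΓ : C(unitInterval, A) := ⟨_, F.continuous.comp (hfΓ.subtype_mk hΓ)⟩
  have huniq := hf.existsUnique_continuousMap_lifts (⟨fun t ↦ f (Γ t), hfΓ⟩ : C(unitInterval, B))
    (a₀ := 0) (e₀ := Γ 0) rfl fun t ↦ hD (hΓ t)
  have hΓF : Γ = FΓ := huniq.unique ⟨rfl, rfl⟩ ⟨hF0, funext fun t ↦ congrFun hF ⟨f (Γ t), hΓ t⟩⟩
  calc Γ 0 = F ⟨f (Γ 0), hΓ 0⟩ := hF0.symm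
    _ = F ⟨f (Γ 1), hΓ 1⟩ := by simp only [h01]
    _ = Γ 1 := (DFunLike.congr_fun hΓF 1).symm

/-- A compact piece `S` of a curve through `p` on which the linear form `ℓ` is a branched cover
over the disc of radius `m` around `ℓ p`, with no branching away from `p`. The field `norm_sub_le`
confines `S` to a cone around the tangent line, so `p` is the only point of `S` over `ℓ p`. -/
structure IsBranchedCover (ℓ : E →L[ℂ] ℂ) (S : Set E) (p : E) (m : ℝ) : Prop where
  isCompact : IsCompact S
  mem : p ∈ S
  norm_sub_le : ∀ x ∈ S, ‖x - p‖ ≤ 2 * ‖ℓ x - ℓ p‖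
  hasHolomorphicSectionAt : ∀ x ∈ S, x ≠ p → ℓ x ∈ ball (ℓ p) m → HasHolomorphicSectionAt ℓ S x

namespace IsBranchedCover

lemma apply_ne (h : IsBranchedCover ℓ S p m) {x : E} (hx : x ∈ S) (hxp : x ≠ p) : ℓ x ≠ ℓ p := by
  intro heq
  have := h.norm_sub_le x hx
  rw [heq, sub_self, norm_zero, mul_zero, norm_le_zero_iff, sub_eq_zero] at this
  exact hxp this

lemma isCoveringMapOn (h : IsBranchedCover ℓ S p m) :
    IsCoveringMapOn (fun x : S ↦ ℓ x) (ball (ℓ p) m \ {ℓ p}) := by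
  have : CompactSpace S := isCompact_iff_compactSpace.1 h.isCompact
  refine IsCoveringMapOn.of_isLocalHomeomorphOn (by fun_prop) (IsLocalHomeomorphOn.mk _ _ ?_)
  intro x hx
  refine HasHolomorphicSectionAt.exists_openPartialHomeomorph x
    (h.hasHolomorphicSectionAt x x.2 (fun hxp ↦ hx.2 (congrArg ℓ hxp)) hx.1)

lemma eq_of_joinedIn (h : IsBranchedCover ℓ S p m) {c : ℂ} {ρ : ℝ}
    (hball : ball c ρ ⊆ ball (ℓ p) m \ {ℓ p}) {x x' : E}
    (hxx' : JoinedIn (S ∩ ℓ ⁻¹' ball c ρ) x x') (hℓ : ℓ x = ℓ x') : x = x' := by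
  obtain ⟨γ, hγ⟩ := hxx'
  have : ContractibleSpace (ball c ρ) :=
    (convex_ball c ρ).contractibleSpace ⟨ℓ (γ 0), (hγ 0).2⟩
  have : LocallyPathConnectedSpace (ball c ρ) := isOpen_ball.locallyPathConnectedSpace
  have heq := eq_of_isCoveringMapOn_of_path h.isCoveringMapOn hball
    (⟨fun t ↦ ⟨γ t, (hγ t).1⟩, by fun_prop⟩ : C(unitInterval, S)) (fun t ↦ (hγ t).2)
    (by simpa using hℓ)
  simpa using congrArg Subtype.val heq

lemma ball_subset_image (h : IsBranchedCover ℓ S p m) (hp : AccPt p (𝓟 S)) :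
    ball (ℓ p) m ⊆ ℓ '' S := by
  rcases le_or_gt m 0 with hm | hm
  · simp [ball_eq_empty.2 hm]
  have hopen : IsOpen (ℓ '' S ∩ (ball (ℓ p) m \ {ℓ p})) := by
    rw [isOpen_iff_mem_nhds]
    rintro _ ⟨⟨x, hx, rfl⟩, hxm, hxp⟩
    obtain ⟨s, -, hs, -⟩ := h.hasHolomorphicSectionAt x hx (fun hxp' ↦ hxp (congrArg ℓ hxp')) hxm
    have hpunctured := (isOpen_ball.sdiff isClosed_singleton).mem_nhds ⟨hxm, hxp⟩
    filter_upwards [hs, hpunctured] with w hw hwm using ⟨⟨s w, hw⟩, hwm⟩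
  have hne : ((ball (ℓ p) m \ {ℓ p}) ∩ (ℓ '' S ∩ (ball (ℓ p) m \ {ℓ p}))).Nonempty := by
    have hnear : ∀ᶠ x in 𝓝 p, ℓ x ∈ ball (ℓ p) m :=
      ℓ.continuous.continuousAt.eventually_mem (ball_mem_nhds _ hm)
    obtain ⟨x, ⟨hxp, hxS⟩, hxm⟩ := ((accPt_iff_frequently.1 hp).and_eventually hnear).exists
    have hx : ℓ x ∈ ball (ℓ p) m \ {ℓ p} := ⟨hxm, h.apply_ne hxS hxp⟩
    exact ⟨ℓ x, hx, mem_image_of_mem ℓ hxS, hx⟩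
  have hpunctured : ball (ℓ p) m \ {ℓ p} ⊆ ℓ '' S ∩ (ball (ℓ p) m \ {ℓ p}) := by
    refine (isPreconnected_ball_diff_center _ hm).subset_of_closure_inter_subset hopen hne ?_
    rintro w ⟨hw, hwm⟩
    have hclosed := (h.isCompact.image ℓ.continuous).isClosed
    exact ⟨closure_minimal inter_subset_left hclosed hw, hwm⟩
  intro w hw
  by_cases hwp : w = ℓ p
  · exact hwp ▸ mem_image_of_mem ℓ h.mem
  · exact (hpunctured ⟨hw, hwp⟩).1

lemma differentiableOn_rightInverse [CompleteSpace E] (h : IsBranchedCover ℓ S p m)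
    (hinj : InjOn ℓ S) {g : ℂ → E} (hg : ∀ w ∈ ball (ℓ p) m, g w ∈ S ∧ ℓ (g w) = w) :
    DifferentiableOn ℂ g (ball (ℓ p) m) := by
  rcases le_or_gt m 0 with hm | hm
  · simp [ball_eq_empty.2 hm, DifferentiableOn]
  have hcenter := mem_ball_self (x := ℓ p) hm
  have hgp : g (ℓ p) = p := hinj (hg _ hcenter).1 h.mem (hg _ hcenter).2
  rw [← Complex.differentiableOn_compl_singleton_and_continuousAt_iff (ball_mem_nhds _ hm)]
  constructor
  · rintro w ⟨hw, hwp⟩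
    obtain ⟨hgS, hgw⟩ := hg w hw
    have hne : g w ≠ p := fun hgwp ↦ hwp (by rw [← hgw, hgwp, mem_singleton_iff])
    obtain ⟨s, hs, hsS, -⟩ := h.hasHolomorphicSectionAt _ hgS hne (by rwa [hgw])
    rw [hgw] at hs hsS
    have hgs : g =ᶠ[𝓝 w] s := by
      filter_upwards [hsS, isOpen_ball.mem_nhds hw] with u hu hum
      exact hinj (hg u hum).1 hu.1 ((hg u hum).2.trans hu.2.symm)
    exact (hs.differentiableAt.congr_of_eventuallyEq hgs).differentiableWithinAt
  · have hbound : ∀ᶠ w in 𝓝 (ℓ p), ‖g w - g (ℓ p)‖ ≤ 2 * ‖w - ℓ p‖ := by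
      filter_upwards [ball_mem_nhds _ hm] with w hw
      simpa only [hgp, (hg w hw).2] using h.norm_sub_le _ (hg w hw).1
    have hzero : Tendsto (fun w ↦ 2 * ‖w - ℓ p‖) (𝓝 (ℓ p)) (𝓝 0) :=
      Continuous.tendsto' (by fun_prop) _ _ (by simp)
    exact tendsto_sub_nhds_zero_iff.1 (squeeze_zero_norm' hbound hzero)

lemma exists_injOn (h : IsBranchedCover ℓ S p m) (hm : 0 < m) (hS : S ∈ 𝓝[X] p)
    (hchord : ∀ ε > 0, ∃ N ∈ 𝓝 p, ∀ x ∈ X ∩ N, ∀ x' ∈ X ∩ N, ℓ x = ℓ x' →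
      ‖x - x'‖ ≤ ε * ‖ℓ x - ℓ p‖)
    (hjoin : ∃ K : ℝ, ∃ W ∈ 𝓝 p, ∀ x ∈ X ∩ W, ∀ x' ∈ X ∩ W,
      JoinedIn (X ∩ closedBall x (K * ‖x - x'‖)) x x') :
    ∃ N ∈ 𝓝 p, InjOn ℓ (X ∩ N) := by
  obtain ⟨K, W, hW, hjoin⟩ := hjoin
  obtain ⟨r, hr, hrS⟩ := mem_nhdsWithin_iff.1 hS
  obtain ⟨ε, hε, hKε⟩ := exists_pos_mul_lt one_pos (‖ℓ‖ * |K|)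
  obtain ⟨N, hN, hchord⟩ := hchord ε hε
  have hnear : ∀ᶠ x in 𝓝 p, ‖x - p‖ + |K| * (ε * ‖ℓ x - ℓ p‖) < r ∧ ‖ℓ x - ℓ p‖ < m / 2 := by
    refine (Tendsto.eventually_lt_const hr ?_).and (Tendsto.eventually_lt_const (half_pos hm) ?_)
    all_goals exact Continuous.tendsto' (by fun_prop) _ _ (by simp)
  refine ⟨N ∩ W ∩ {x | _}, inter_mem (inter_mem hN hW) hnear, ?_⟩
  rintro x ⟨hxX, ⟨hxN, hxW⟩, hxr, hxm⟩ x' ⟨hxX', ⟨hxN', hxW'⟩, -, -⟩ hℓ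
  have hle := hchord x ⟨hxX, hxN⟩ x' ⟨hxX', hxN'⟩ hℓ
  rcases (norm_nonneg (ℓ x - ℓ p)).eq_or_lt with hρ | hρ
  · rwa [← hρ, mul_zero, norm_le_zero_iff, sub_eq_zero] at hle
  have hdisc : ball (ℓ x) ‖ℓ x - ℓ p‖ ⊆ ball (ℓ p) m \ {ℓ p} := fun w hw ↦ by
    refine ⟨?_, fun hwp ↦ ?_⟩
    · rw [mem_ball_iff_norm] at hw ⊢
      linarith [norm_sub_le_norm_sub_add_norm_sub w (ℓ x) (ℓ p)]
    · rw [mem_singleton_iff.1 hwp, mem_ball_iff_norm'] at hw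
      exact hw.false
  refine h.eq_of_joinedIn hdisc ((hjoin x ⟨hxX, hxW⟩ x' ⟨hxX', hxW'⟩).mono ?_) hℓ
  rintro y ⟨hyX, hyx⟩
  replace hyx : ‖y - x‖ ≤ |K| * (ε * ‖ℓ x - ℓ p‖) :=
    (mem_closedBall_iff_norm.1 hyx).trans (mul_le_mul (le_abs_self K) hle (norm_nonneg _)
      (abs_nonneg K))
  refine ⟨hrS ⟨mem_ball_iff_norm.2 ?_, hyX⟩, mem_ball_iff_norm.2 ?_⟩
  · linarith [norm_sub_le_norm_sub_add_norm_sub y x p]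
  · calc ‖ℓ y - ℓ x‖ ≤ ‖ℓ‖ * ‖y - x‖ := by rw [← map_sub]; exact ℓ.le_opNorm _
      _ ≤ ‖ℓ‖ * (|K| * (ε * ‖ℓ x - ℓ p‖)) := by gcongr
      _ = ‖ℓ‖ * |K| * ε * ‖ℓ x - ℓ p‖ := by ring
      _ < ‖ℓ x - ℓ p‖ := mul_lt_of_lt_one_left hρ hKε

end IsBranchedCover

lemma deriv_ne_zero_of_eventually_apply_eq {g : ℂ → E} {z : ℂ} (hg : DifferentiableAt ℂ g z)
    (h : ∀ᶠ w in 𝓝 z, ℓ (g w) = w) : deriv g z ≠ 0 := by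
  intro hzero
  have hcomp : HasDerivAt (fun w ↦ ℓ (g w)) (ℓ (deriv g z)) z :=
    ℓ.hasFDerivAt.comp_hasDerivAt z hg.hasDerivAt
  rw [hzero, map_zero] at hcomp
  exact zero_ne_one ((hcomp.congr_of_eventuallyEq (h.mono fun w hw ↦ hw.symm)).unique
    (hasDerivAt_id z))

section Regularity

variable {k : ℕ} {X S : Set (EuclideanSpace ℂ (Fin k))} {p : EuclideanSpace ℂ (Fin k)}
  {ℓ : EuclideanSpace ℂ (Fin k) →L[ℂ] ℂ} {m : ℝ}

lemma IsBranchedCover.isRegularPoint (h : IsBranchedCover ℓ S p m) (hm : 0 < m)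
    (hinj : InjOn ℓ S) (hSX : S ⊆ X) (hS : S ∈ 𝓝[X] p) (hp : AccPt p (𝓟 S)) :
    IsRegularPoint X p := by
  obtain ⟨U, hUo, hpU, hUS⟩ := mem_nhdsWithin.1 hS
  have hex : ∀ w ∈ ball (ℓ p) m, ∃ x ∈ S, ℓ x = w := h.ball_subset_image hp
  choose! g hgS hgℓ using hex
  have hgx : ∀ x ∈ S, ℓ x ∈ ball (ℓ p) m → g (ℓ x) = x :=
    fun x hx hxm ↦ hinj (hgS _ hxm) hx (hgℓ _ hxm)
  have hdiff := h.differentiableOn_rightInverse hinj fun w hw ↦ ⟨hgS w hw, hgℓ w hw⟩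
  have hDo : IsOpen (ball (ℓ p) m ∩ g ⁻¹' U) :=
    hdiff.continuousOn.isOpen_inter_preimage isOpen_ball hUo
  have hleft : LeftInvOn ℓ g (ball (ℓ p) m ∩ g ⁻¹' U) := fun w hw ↦ hgℓ w hw.1
  refine ⟨U ∩ ℓ ⁻¹' ball (ℓ p) m, ball (ℓ p) m ∩ g ⁻¹' U, g,
    hUo.inter (isOpen_ball.preimage ℓ.continuous), ⟨hpU, mem_ball_self hm⟩, hDo,
    hdiff.mono inter_subset_left, hleft.injOn, fun z hz ↦ ?_, hleft.injOn, ?_,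
    hdiff.continuousOn.mono inter_subset_left, ℓ, ℓ.continuous.continuousOn, hleft⟩
  · refine deriv_ne_zero_of_eventually_apply_eq (ℓ := ℓ)
      (hdiff.differentiableAt (isOpen_ball.mem_nhds hz.1)) ?_
    filter_upwards [isOpen_ball.mem_nhds hz.1] with w hw using hgℓ w hw
  · ext x
    constructor
    · rintro ⟨w, hw, rfl⟩
      exact ⟨hSX (hgS w hw.1), hw.2, by rw [mem_preimage, hgℓ w hw.1]; exact hw.1⟩
    · rintro ⟨hxX, hxU, hxm⟩
      have hx := hgx x (hUS ⟨hxU, hxX⟩) hxm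
      exact ⟨ℓ x, ⟨hxm, by rwa [mem_preimage, hx]⟩, hx⟩

lemma IsAlgebraicCurve.exists_isBranchedCover (hX : IsAlgebraicCurve X) (hp : p ∈ X)
    (hacc : ∀ᶠ x in 𝓝[X] p, AccPt x (𝓟 X))
    (hℓ : ∀ᶠ x in 𝓝[X] p, ‖x - p‖ ≤ 2 * ‖ℓ x - ℓ p‖) {N : Set (EuclideanSpace ℂ (Fin k))}
    (hN : N ∈ 𝓝 p) :
    ∃ S m, 0 < m ∧ S ⊆ X ∩ N ∧ S ∈ 𝓝[X] p ∧ IsBranchedCover ℓ S p m := by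
  obtain ⟨B, hB, hsec⟩ := hX.exists_finite_forall_hasHolomorphicSectionAt ℓ
  obtain ⟨M, hM, hMX⟩ := mem_nhdsWithin_iff_exists_mem_nhds_inter.1 (hacc.and hℓ)
  obtain ⟨r, hr, hrM⟩ := nhds_basis_closedBall.mem_iff.1 (inter_mem hN hM)
  have hbranch : (B \ {ℓ p})ᶜ ∈ 𝓝 (ℓ p) := hB.sdiff.isClosed.isOpen_compl.mem_nhds (by simp)
  obtain ⟨m₀, hm₀, hm₀B⟩ := Metric.mem_nhds_iff.1 hbranch
  let m := min m₀ (r / 3)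
  have hm : 0 < m := by positivity
  let S := X ∩ (closedBall p r ∩ ℓ ⁻¹' closedBall (ℓ p) m)
  have hSN : ∀ x ∈ S, x ∈ N ∩ M := fun x hx ↦ hrM hx.2.1
  have hcone : ∀ x ∈ S, ‖x - p‖ ≤ 2 * ‖ℓ x - ℓ p‖ := fun x hx ↦ (hMX ⟨(hSN x hx).2, hx.1⟩).2
  have hSnhds : ∀ x ∈ S, ℓ x ∈ ball (ℓ p) m → S ∈ 𝓝[X] x := fun x hx hxm ↦ by
    have hxr : x ∈ ball p r := by
      rw [mem_ball_iff_norm] at hxm ⊢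
      linarith [hcone x hx, min_le_right m₀ (r / 3)]
    refine inter_mem self_mem_nhdsWithin (mem_nhdsWithin_of_mem_nhds (inter_mem ?_ ?_))
    · exact mem_of_superset (isOpen_ball.mem_nhds hxr) ball_subset_closedBall
    · exact ℓ.continuous.continuousAt.preimage_mem_nhds
        (mem_of_superset (isOpen_ball.mem_nhds hxm) ball_subset_closedBall)
  have hpS : p ∈ S := ⟨hp, mem_closedBall_self hr.le, mem_closedBall_self hm.le⟩
  refine ⟨S, m, hm, fun x hx ↦ ⟨hx.1, (hSN x hx).1⟩, hSnhds p hpS (mem_ball_self hm), ?_, hpS,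
    hcone, fun x hx hxp hxm ↦ ?_⟩
  · exact ((isCompact_closedBall p r).inter_right
      (isClosed_closedBall.preimage ℓ.continuous)).inter_left hX.isClosed
  · have hℓx : ℓ x ≠ ℓ p := fun heq ↦ hxp (by simpa [heq, sub_eq_zero] using hcone x hx)
    have hxB : ℓ x ∉ B := fun hxB ↦ hm₀B (ball_subset_ball (min_le_left _ _) hxm) ⟨hxB, hℓx⟩
    exact (hsec x hx.1 hxB (hMX ⟨(hSN x hx).2, hx.1⟩).1).of_mem_nhdsWithin hx.1
      inter_subset_left (hSnhds x hx hxm)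

lemma IsAlgebraicCurve.isRegularPoint_of_germBiLipschitzEquiv_univ (hX : IsAlgebraicCurve X)
    (hp : p ∈ X) {z₀ : ℂ} (h : GermBiLipschitzEquiv (univ : Set ℂ) z₀ X p) :
    IsRegularPoint X p := by
  have hacc : AccPt p (𝓟 X) := h.eventually_accPt.self_of_nhdsWithin hp
  obtain ⟨e, he, htangent⟩ := hX.exists_isLittleO_tangent hacc fun N ↦ h.exists_isPreconnected
  have hcone := eventually_norm_sub_le_of_isLittleO he htangent
  have hchord := fun ε ↦ exists_norm_sub_le_mul_of_isLittleO (ε := ε) he htangent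
  obtain ⟨N, hN, hinj⟩ : ∃ N ∈ 𝓝 p, InjOn (innerSL ℂ e) (X ∩ N) := by
    obtain ⟨S, m, hm, -, hS, hcover⟩ :=
      hX.exists_isBranchedCover hp h.eventually_accPt hcone univ_mem
    exact hcover.exists_injOn hm hS hchord h.exists_joinedIn_closedBall
  obtain ⟨S, m, hm, hSN, hS, hcover⟩ := hX.exists_isBranchedCover hp h.eventually_accPt hcone hN
  have haccS : AccPt p (𝓟 S) := by
    rw [accPt_iff_frequently] at hacc ⊢
    refine (hacc.and_eventually (mem_nhdsWithin_iff_eventually.1 hS)).mono ?_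
    exact fun x hx ↦ ⟨hx.1.1, hx.2 hx.1.2⟩
  exact hcover.isRegularPoint hm (hinj.mono hSN) (hSN.trans inter_subset_left) hS haccS

end Regularity

end BranchedCover

theorem stmt_10_general {n m : ℕ} {X : Set (EuclideanSpace ℂ (Fin n))}
    {Y : Set (EuclideanSpace ℂ (Fin m))} (hX : IsAlgebraicCurve X)
    {p : EuclideanSpace ℂ (Fin n)} {q : EuclideanSpace ℂ (Fin m)} (hp : p ∈ X)
    (hqreg : IsRegularPoint Y q) (h : GermBiLipschitzEquiv X p Y q) : IsRegularPoint X p := by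
  obtain ⟨z₀, hz₀⟩ := hqreg.exists_germBiLipschitzEquiv (h.mem_right hp)
  exact hX.isRegularPoint_of_germBiLipschitzEquiv_univ hp (hz₀.trans (h.symm hp) (mem_univ z₀))

/-- if the germ of a curve `X` at `p` is bi-Lipschitz equivalent to the germ
of a curve `Y` at a regular point `q`, then `p` is a regular point of `X`. -/
theorem stmt_10 (n m : ℕ) (X : Set (EuclideanSpace ℂ (Fin n)))
    (Y : Set (EuclideanSpace ℂ (Fin m)))
    (hX : IsAlgebraicCurve X) (hY : IsAlgebraicCurve Y)
    (p : EuclideanSpace ℂ (Fin n)) (q : EuclideanSpace ℂ (Fin m))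
    (hp : p ∈ X) (hq : q ∈ Y) (hqreg : IsRegularPoint Y q)
    (h : GermBiLipschitzEquiv X p Y q) :
    IsRegularPoint X p :=
  stmt_10_general hX hp hqreg h

end
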